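/- arXiv:1111.6348 — 4 statements merged into one kernel-verified Lean document; each statement's English description precedes it below -/
import Mathlib

section
/- Let μ be a finite positive Borel measure on ℂ with compact infinite support, let x ∈ ℂ and t > 0, and set μ_x = μ + tδ_x. Then for every n ≥ 1, ‖Φ_n(·;μ_x)‖²_{L²(μ_x)} / ‖Φ_n(·;μ)‖²_{L²(μ)} = (1 + t·K_n(x,x;μ)) / (1 + t·K_{n−1}(x,x;μ)). -/
/-!
Both measures have orthonormal polynomials, so every polynomial is square integrable for both, and
the two monic norms squared are `1 / κ' n ^ 2` and `1 / κ n ^ 2`. Hence the claim concerns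
`r = κ' n / κ n`, the leading coefficient of `q n` in the basis `p`.

Any `f` of degree at most `n` is its own Fourier sum `∑ j ≤ n, ⟨p j, f⟩ p j`, and the top Fourier
coefficient is the ratio of leading coefficients (`eval_eq_sum`, `top_coeff`). Write `Q = q n (x)`.
Since `⟨p j, q n⟩_{μ + tδ_x} = ⟨p j, q n⟩_μ + t * conj (p j (x)) * Q`, and the left side is `0` for
`j < n` and `1 / r` for `j = n`, the Fourier coefficients of `q n` are `- t * conj (p j (x)) * Q`
for `j < n`, while the top one, `r`, satisfies `r + t * conj (p n (x)) * Q = 1 / r`. Evaluating the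
Fourier sum at `x` gives `Q * (1 + t * K_{n-1}) = r * p n (x)`, and eliminating `Q` yields
`(1 + t * K_n) / (1 + t * K_{n-1}) = 1 / r ^ 2`.
-/


open MeasureTheory Filter Topology Polynomial

noncomputable section

/-- The closed support of a measure: the set of points all of whose neighborhoods
have positive measure. -/
def measSupport {α : Type*} [TopologicalSpace α] [MeasurableSpace α] (μ : Measure α) : Set α :=
  {x | ∀ U ∈ nhds x, μ U ≠ 0}

/-- `p` is the sequence of orthonormal polynomials for `μ`, with positive real leading
coefficients `κ`. -/
def OrthonormalPolys (μ : Measure ℂ) (p : ℕ → Polynomial ℂ) (κ : ℕ → ℝ) : Prop :=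
  (∀ n, (p n).degree = n) ∧ (∀ n, 0 < κ n) ∧ (∀ n, (p n).leadingCoeff = (κ n : ℂ)) ∧
  (∀ n m, ∫ z, (starRingEnd ℂ) ((p n).eval z) * (p m).eval z ∂μ
      = if n = m then 1 else 0)

namespace Uvarov

variable {μ : Measure ℂ} {p : ℕ → Polynomial ℂ} {κ : ℕ → ℝ}

lemma norm_sq_integral (h : OrthonormalPolys μ p κ) (n : ℕ) :
    ∫ z, ‖(p n).eval z‖ ^ 2 ∂μ = 1 := by
  have h1 := h.2.2.2 n n
  simp only [Complex.conj_mul', if_true] at h1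
  have h2 : ∫ z, (((‖(p n).eval z‖ ^ 2 : ℝ)) : ℂ) ∂μ = 1 := by
    simpa using h1
  rw [integral_complex_ofReal] at h2
  exact_mod_cast h2

/-- A non-integrable function has integral `0`, so the normalization forces square
integrability. -/
lemma memLp_p (h : OrthonormalPolys μ p κ) (n : ℕ) :
    MemLp (fun z => (p n).eval z) 2 μ := by
  rw [memLp_two_iff_integrable_sq_norm (p n).continuous.aestronglyMeasurable]
  by_contra hn
  have h1 := norm_sq_integral h n
  rw [integral_undef hn] at h1
  exact zero_ne_one h1

/-- Subtracting `(f.coeff n / κ n) p n` from `f` lowers the degree, which gives the induction. -/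
lemma exists_expansion (h : OrthonormalPolys μ p κ) (n : ℕ) :
    ∀ f : Polynomial ℂ, f.degree < n → ∃ c : ℕ → ℂ, f = ∑ j ∈ Finset.range n, C (c j) * p j := by
  induction n with
  | zero =>
    intro f hf
    refine ⟨0, ?_⟩
    simpa [← Polynomial.degree_eq_bot, Nat.WithBot.lt_zero_iff] using hf
  | succ n ih =>
    intro f hf
    have hκ : (κ n : ℂ) ≠ 0 := by exact_mod_cast (h.2.1 n).ne'
    have hco : (p n).coeff n = κ n := by
      rw [← h.2.2.1 n, leadingCoeff, natDegree_eq_of_degree_eq_some (h.1 n)]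
    obtain ⟨c, hc⟩ := ih (f - C (f.coeff n / κ n) * p n) (by
      rw [Polynomial.degree_lt_iff_coeff_zero]
      intro m hm
      rw [coeff_sub, coeff_C_mul]
      rcases hm.eq_or_lt with rfl | hm
      · rw [hco]; field_simp; simp
      · rw [coeff_eq_zero_of_degree_lt (n := m) (p := p n) (by rw [h.1 n]; exact_mod_cast hm),
          (Polynomial.degree_lt_iff_coeff_zero f (n + 1)).1 hf m hm]
        simp)
    refine ⟨fun j => if j = n then f.coeff n / κ n else c j, ?_⟩
    simp only [Finset.sum_range_succ, if_true]
    rw [← sub_eq_iff_eq_add, hc]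
    refine Finset.sum_congr rfl fun j hj => ?_
    rw [if_neg (Finset.mem_range.1 hj).ne]

lemma memLp_poly (h : OrthonormalPolys μ p κ) (f : Polynomial ℂ) :
    MemLp (fun z => f.eval z) 2 μ := by
  obtain ⟨c, hc⟩ := exists_expansion h (f.natDegree + 1) f (by
    exact lt_of_le_of_lt degree_le_natDegree (by exact_mod_cast Nat.lt_succ_self _))
  have : (fun z => f.eval z) =
      fun z => ∑ j ∈ Finset.range (f.natDegree + 1), c j * (p j).eval z := by
    funext z
    conv_lhs => rw [hc]
    simp [eval_finsetSum]
  rw [this]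
  exact memLp_finsetSum _ fun j _ => (memLp_p h j).const_mul (c j)

lemma integrable_inner (h : OrthonormalPolys μ p κ) (f g : Polynomial ℂ) :
    Integrable (fun z => (starRingEnd ℂ) (f.eval z) * g.eval z) μ :=
  MemLp.integrable_mul (p := 2) (q := 2) (memLp_poly h f).star (memLp_poly h g)

lemma inner_sum (h : OrthonormalPolys μ p κ) (n : ℕ) (c : ℕ → ℂ) {k : ℕ} (hk : k < n) :
    ∫ z, (starRingEnd ℂ) ((p k).eval z) *
      (∑ j ∈ Finset.range n, C (c j) * p j).eval z ∂μ = c k := by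
  simp only [eval_finsetSum, eval_mul, eval_C, Finset.mul_sum, mul_left_comm _ (c _)]
  rw [integral_finsetSum _ fun j _ => (integrable_inner h _ _).const_mul _]
  simp only [integral_const_mul, h.2.2.2]
  simp [hk]

/-- A polynomial of degree less than `n` equals its Fourier sum of order `n`. -/
lemma eval_eq_sum (h : OrthonormalPolys μ p κ) (n : ℕ) (f : Polynomial ℂ) (hf : f.degree < n) :
    f = ∑ j ∈ Finset.range n,
      C (∫ z, (starRingEnd ℂ) ((p j).eval z) * f.eval z ∂μ) * p j := by
  obtain ⟨c, hc⟩ := exists_expansion h n f hf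
  conv_lhs => rw [hc]
  refine Finset.sum_congr rfl fun j hj => ?_
  rw [hc, inner_sum h n c (Finset.mem_range.1 hj)]

/-- The top Fourier coefficient is a ratio of leading coefficients; it vanishes when
`f` has degree less than `n`. -/
lemma top_coeff (h : OrthonormalPolys μ p κ) (n : ℕ) (f : Polynomial ℂ)
    (hf : f.degree < (n + 1 : ℕ)) :
    ∫ z, (starRingEnd ℂ) ((p n).eval z) * f.eval z ∂μ = f.coeff n / κ n := by
  have hκ : (κ n : ℂ) ≠ 0 := by exact_mod_cast (h.2.1 n).ne'
  have hco : (p n).coeff n = κ n := by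
    rw [← h.2.2.1 n, leadingCoeff, natDegree_eq_of_degree_eq_some (h.1 n)]
  have h1 := congrArg (fun g => coeff g n) (eval_eq_sum h (n + 1) f hf)
  simp only [Finset.sum_range_succ, coeff_add, finsetSum_coeff, coeff_C_mul, hco] at h1
  rw [Finset.sum_eq_zero, zero_add] at h1
  · rw [h1]; field_simp
  · intro j hj
    rw [coeff_eq_zero_of_degree_lt (n := n) (p := p j), mul_zero]
    rw [h.1 j]
    exact_mod_cast Finset.mem_range.1 hj

lemma monic_norm (h : OrthonormalPolys μ p κ) (n : ℕ) :
    ∫ z, ‖(p n).eval z / (κ n : ℂ)‖ ^ 2 ∂μ = 1 / κ n ^ 2 := by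
  simp only [norm_div, div_pow, Complex.norm_real, Real.norm_eq_abs, sq_abs]
  rw [integral_div, norm_sq_integral h]

lemma inner_add_dirac (h : OrthonormalPolys μ p κ) (x : ℂ) {t : ℝ} (ht : 0 < t)
    (f g : Polynomial ℂ) :
    ∫ z, (starRingEnd ℂ) (f.eval z) * g.eval z ∂(μ + ENNReal.ofReal t • Measure.dirac x) =
      (∫ z, (starRingEnd ℂ) (f.eval z) * g.eval z ∂μ) +
        t * ((starRingEnd ℂ) (f.eval x) * g.eval x) := by
  rw [integral_add_measure (integrable_inner h f g), integral_smul_measure, integral_dirac,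
    ENNReal.toReal_ofReal ht.le, Complex.real_smul]
  exact (integrable_dirac enorm_lt_top).smul_measure ENNReal.ofReal_ne_top

/-- Conjugate form of `top_coeff`: the product with `p n` in the second argument. -/
lemma top_coeff_swap (h : OrthonormalPolys μ p κ) (n : ℕ) (f : Polynomial ℂ)
    (hf : f.degree < (n + 1 : ℕ)) :
    ∫ z, (starRingEnd ℂ) (f.eval z) * (p n).eval z ∂μ =
      (starRingEnd ℂ) (f.coeff n) / κ n := by
  have h1 := congrArg (starRingEnd ℂ) (top_coeff h n f hf)
  rw [← integral_conj] at h1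
  simpa [mul_comm] using h1

end Uvarov

open Uvarov in
theorem uvarov_monic_norm_ratio
    (μ : Measure ℂ) [IsFiniteMeasure μ]
    (hc : IsCompact (measSupport μ)) (hi : (measSupport μ).Infinite)
    (x : ℂ) (t : ℝ) (ht : 0 < t)
    (p : ℕ → Polynomial ℂ) (κ : ℕ → ℝ) (hON : OrthonormalPolys μ p κ)
    (q : ℕ → Polynomial ℂ) (κ' : ℕ → ℝ)
    (hON' : OrthonormalPolys (μ + ENNReal.ofReal t • Measure.dirac x) q κ') :
    ∀ n : ℕ, 1 ≤ n →
      (∫ z, ‖(q n).eval z / (κ' n : ℂ)‖ ^ 2 ∂(μ + ENNReal.ofReal t • Measure.dirac x)) /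
          (∫ z, ‖(p n).eval z / (κ n : ℂ)‖ ^ 2 ∂μ) =
        (1 + t * ∑ j ∈ Finset.range (n + 1), ‖(p j).eval x‖ ^ 2) /
          (1 + t * ∑ j ∈ Finset.range n, ‖(p j).eval x‖ ^ 2) := by
  intro n _
  rw [monic_norm hON, monic_norm hON']
  have hκ := hON.2.1 n
  have hκ' := hON'.2.1 n
  have hκc : (κ n : ℂ) ≠ 0 := by exact_mod_cast hκ.ne'
  have hκc' : (κ' n : ℂ) ≠ 0 := by exact_mod_cast hκ'.ne'
  have hpn : (p n).coeff n = κ n := by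
    rw [← hON.2.2.1 n, leadingCoeff, natDegree_eq_of_degree_eq_some (hON.1 n)]
  have hqn : (q n).coeff n = κ' n := by
    rw [← hON'.2.2.1 n, leadingCoeff, natDegree_eq_of_degree_eq_some (hON'.1 n)]
  have hdq : (q n).degree < (n + 1 : ℕ) := by
    rw [hON'.1 n]; exact_mod_cast Nat.lt_succ_self n
  have hdp : ∀ j ≤ n, (p j).degree < (n + 1 : ℕ) := fun j hj => by
    rw [hON.1 j]; exact_mod_cast Nat.lt_succ_of_le hj
  set Q : ℂ := (q n).eval x with hQ
  have htop : ∫ z, (starRingEnd ℂ) ((p n).eval z) * (q n).eval z ∂μ = κ' n / κ n := by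
    rw [top_coeff hON n _ hdq, hqn]
  have hlow : ∀ j ∈ Finset.range n, ∫ z, (starRingEnd ℂ) ((p j).eval z) * (q n).eval z ∂μ =
      -(t * ((starRingEnd ℂ) ((p j).eval x) * Q)) := by
    intro j hj
    have hj' := Finset.mem_range.1 hj
    have h1 := top_coeff_swap hON' n (p j) (hdp j hj'.le)
    rw [inner_add_dirac hON x ht, coeff_eq_zero_of_degree_lt (n := n) (p := p j)
      (by rw [hON.1 j]; exact_mod_cast hj')] at h1
    rw [eq_neg_iff_add_eq_zero, h1]
    simp
  have heq : (κ' n / κ n : ℂ) + t * ((starRingEnd ℂ) ((p n).eval x) * Q) = κ n / κ' n := by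
    have h1 := top_coeff_swap hON' n (p n) (hdp n le_rfl)
    rwa [inner_add_dirac hON x ht, htop, hpn, Complex.conj_ofReal] at h1
  set S : ℝ := ∑ j ∈ Finset.range n, ‖(p j).eval x‖ ^ 2 with hS
  have hS0 : 0 ≤ S := Finset.sum_nonneg fun j _ => by positivity
  have hQeq : Q * (1 + t * S) = κ' n / κ n * (p n).eval x := by
    have h1 : Q = -(t * Q * S) + κ' n / κ n * (p n).eval x := by
      have h2 := congrArg (eval x) (eval_eq_sum hON (n + 1) (q n) hdq)
      rw [Finset.sum_range_succ, htop, Finset.sum_congr rfl fun j hj => by rw [hlow j hj]] at h2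
      simp only [eval_add, eval_finsetSum, eval_mul, eval_C] at h2
      rw [← hQ] at h2
      refine h2.trans ?_
      congr 1
      rw [hS]
      push_cast
      rw [Finset.mul_sum, ← Finset.sum_neg_distrib]
      refine Finset.sum_congr rfl fun j _ => ?_
      rw [← Complex.conj_mul']
      ring
    linear_combination h1
  rw [Finset.sum_range_succ, ← hS]
  have hpos : 0 < 1 + t * S := by positivity
  have hmain : (κ' n : ℂ) ^ 2 * (1 + t * (S + ‖(p n).eval x‖ ^ 2)) = κ n ^ 2 * (1 + t * S) := by
    rw [← Complex.conj_mul']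
    field_simp at heq hQeq
    -- `heq` multiplied by `1 + t * S`, with `hQeq` used to eliminate `Q`
    linear_combination (1 + t * S : ℂ) * heq - t * (κ' n : ℂ) * (starRingEnd ℂ) ((p n).eval x) * hQeq
  have hmain' : κ' n ^ 2 * (1 + t * (S + ‖(p n).eval x‖ ^ 2)) = κ n ^ 2 * (1 + t * S) := by
    exact_mod_cast hmain
  field_simp
  linear_combination -hmain'
end
end

section
/- Let μ₁ and μ₂ be finite positive Borel measures on ℂ with compact supports, with supp(μ₁) infinite, and suppose ‖Φ_n(·;μ₁)‖_{L²(μ₁)} / ‖Φ_n(·;μ₁+μ₂)‖_{L²(μ₁+μ₂)} → 1 as n → ∞. Then p_n(z;μ₁+μ₂)/p_n(z;μ₁) → 1 as n → ∞ for every z ∉ ch(μ₁). -/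
/-!
Write `q = p_n(μ₁ + μ₂) - r_n p_n(μ₁)` with `r_n = κ_n(μ₁ + μ₂) / κ_n(μ₁)`, the ratio of norms that
is assumed to tend to `1`. Then `q` has degree `< n`, so it is orthogonal to `p_n(μ₁)` in `L²(μ₁)`,
and Pythagoras together with `‖p_n(μ₁ + μ₂)‖_{L²(μ₁)} ≤ ‖p_n(μ₁ + μ₂)‖_{L²(μ₁ + μ₂)} = 1` gives
`‖q‖²_{L²(μ₁)} ≤ 1 - r_n² → 0`.

It remains to bound `q(z) / p_n(z; μ₁)` by a constant times `‖q‖_{L²(μ₁)}`, uniformly in `n`, for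
`z` outside the convex hull. The polynomial `w ↦ (q(z) p_n(w) - p_n(z) q(w)) / (z - w)` has degree
`< n`, so it is orthogonal to `p_n`, which says that
`q(z) ∫ |p_n|² / (z - w) dμ₁ = p_n(z) ∫ conj(p_n) q / (z - w) dμ₁`.
The integral on the right is at most `‖q‖ / dist(z, supp μ₁)`, and the one on the left is bounded
away from `0`, since separating `z` from the (compact) convex hull by a line shows that `1 / (z - w)` takes
its values in a half plane at positive distance from the origin. Taking `q = 1` in this identity
shows that `p_n(z; μ₁) ≠ 0`.
-/

open MeasureTheory Filter Topology Polynomial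

noncomputable section

/-! ### Measures with compact support -/

lemma ae_mem_measSupport (μ : Measure ℂ) : ∀ᵐ z ∂μ, z ∈ measSupport μ := by
  have h : measSupport μ = μ.support := by
    ext x
    simp [measSupport, Measure.mem_support_iff_forall, pos_iff_ne_zero]
  rw [h]
  exact Measure.support_mem_ae

lemma integrable_of_continuousOn_measSupport {E : Type*} [NormedAddCommGroup E] (μ : Measure ℂ)
    [IsFiniteMeasure μ] (hc : IsCompact (measSupport μ)) {f : ℂ → E}
    (hf : ContinuousOn f (measSupport μ)) : Integrable f μ := by
  have h : μ.restrict (measSupport μ) = μ := Measure.restrict_eq_self_of_ae_mem (ae_mem_measSupport μ)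
  have := hf.integrableOn_compact (μ := μ) hc
  rwa [IntegrableOn, h] at this

/-! ### Orthogonality relations -/

lemma OrthonormalPolys.integral_norm_sq {μ : Measure ℂ} {p : ℕ → ℂ[X]} {κ : ℕ → ℝ}
    (h : OrthonormalPolys μ p κ) (n : ℕ) : ∫ z, ‖(p n).eval z‖ ^ 2 ∂μ = 1 := by
  have h1 := h.2.2.2 n n
  simp only [if_true, Complex.conj_mul'] at h1
  have h2 : ∀ z, (‖(p n).eval z‖ : ℂ) ^ 2 = ((‖(p n).eval z‖ ^ 2 : ℝ) : ℂ) := by simp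
  simp only [h2] at h1
  rw [integral_complex_ofReal] at h1
  exact_mod_cast h1

lemma OrthonormalPolys.sqrt_integral_monic {μ : Measure ℂ} {p : ℕ → ℂ[X]} {κ : ℕ → ℝ}
    (h : OrthonormalPolys μ p κ) (n : ℕ) :
    Real.sqrt (∫ z, ‖(p n).eval z / (κ n : ℂ)‖ ^ 2 ∂μ) = (κ n)⁻¹ := by
  have hk := h.2.1 n
  simp only [norm_div, div_pow, Complex.norm_real, Real.norm_eq_abs, sq_abs]
  rw [integral_div, h.integral_norm_sq, one_div, ← inv_pow, Real.sqrt_sq (by positivity)]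

/-- If `P` has degree `m` and `q` has degree at most `m`, subtracting the right multiple of `P`
lowers the degree. -/
lemma degree_sub_C_mul_lt {q P : ℂ[X]} {m : ℕ} (hq : q.degree < (m + 1 : ℕ)) (hP : P.degree = m) :
    (q - C (q.coeff m / P.leadingCoeff) * P).degree < m := by
  have hP0 : P ≠ 0 := by rintro rfl; simp at hP
  have hl : P.coeff m = P.leadingCoeff := by
    rw [leadingCoeff, natDegree_eq_of_degree_eq_some hP]
  have hl0 : P.leadingCoeff ≠ 0 := leadingCoeff_ne_zero.2 hP0
  rw [degree_lt_iff_coeff_zero]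
  intro k hk
  rcases hk.eq_or_lt with rfl | hk
  · simp [hl, hl0]
  · have h1 : q.coeff k = 0 := coeff_eq_zero_of_degree_lt (hq.trans_le (by exact_mod_cast hk))
    have h2 : P.coeff k = 0 := coeff_eq_zero_of_degree_lt (by rw [hP]; exact_mod_cast hk)
    simp [h1, h2]

lemma OrthonormalPolys.integral_conj_mul_eq_zero {μ : Measure ℂ} [IsFiniteMeasure μ]
    (hc : IsCompact (measSupport μ)) {p : ℕ → ℂ[X]} {κ : ℕ → ℝ}
    (h : OrthonormalPolys μ p κ) (n : ℕ) {q : ℂ[X]} (hq : q.degree < n) :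
    ∫ z, (starRingEnd ℂ) ((p n).eval z) * q.eval z ∂μ = 0 := by
  suffices H : ∀ m ≤ n, ∀ q : ℂ[X], q.degree < m →
      ∫ z, (starRingEnd ℂ) ((p n).eval z) * q.eval z ∂μ = 0 from H n le_rfl q hq
  intro m
  induction m with
  | zero =>
    intro _ q hq
    have : q = 0 := by simpa [Nat.WithBot.lt_zero_iff] using hq
    simp [this]
  | succ m ih =>
    intro hm q hq
    set c := q.coeff m / (p m).leadingCoeff with hcdef
    have h0 := ih (by omega) _ (degree_sub_C_mul_lt hq (h.1 m))
    have h1 := h.2.2.2 n m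
    rw [if_neg (by omega)] at h1
    have hi : ∀ r : ℂ[X], Integrable (fun z => (starRingEnd ℂ) ((p n).eval z) * r.eval z) μ :=
      fun r => integrable_of_continuousOn_measSupport μ hc (by fun_prop)
    have h2 : ∀ z, (starRingEnd ℂ) ((p n).eval z) * q.eval z =
        (starRingEnd ℂ) ((p n).eval z) * (q - C c * p m).eval z +
          c * ((starRingEnd ℂ) ((p n).eval z) * (p m).eval z) := by
      intro z; simp; ring
    simp only [h2]
    rw [integral_add (hi _) ((hi _).const_mul c), integral_const_mul, h0, h1]
    simp

/-- The Christoffel-type identity: `w ↦ (q(z) p_n(w) - p_n(z) q(w)) / (z - w)` is a polynomial of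
degree `< n`, hence orthogonal to `p_n`. -/
lemma OrthonormalPolys.eval_mul_integral {μ : Measure ℂ} [IsFiniteMeasure μ]
    (hc : IsCompact (measSupport μ)) {p : ℕ → ℂ[X]} {κ : ℕ → ℝ}
    (h : OrthonormalPolys μ p κ) (n : ℕ) {q : ℂ[X]} (hq : q.degree < n) {z : ℂ}
    (hz : z ∉ measSupport μ) :
    q.eval z * ∫ w, ((‖(p n).eval w‖ ^ 2 : ℝ) : ℂ) * (z - w)⁻¹ ∂μ =
      (p n).eval z * ∫ w, (starRingEnd ℂ) ((p n).eval w) * q.eval w * (z - w)⁻¹ ∂μ := by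
  set N : ℂ[X] := C (q.eval z) * p n - C ((p n).eval z) * q with hN
  have hroot : N.IsRoot z := by simp [hN, IsRoot, mul_comm]
  obtain ⟨g, hg⟩ := dvd_iff_isRoot.2 hroot
  have hNdeg : N.degree ≤ n := by
    refine (degree_sub_le _ _).trans (max_le ?_ ?_)
    · rw [← smul_eq_C_mul]
      exact (degree_smul_le _ _).trans (h.1 n).le
    · rw [← smul_eq_C_mul]
      exact (degree_smul_le _ _).trans hq.le
  have hgdeg : g.degree < n := by
    by_cases hg0 : g = 0
    · simp [hg0, bot_lt_iff_ne_bot]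
    · rw [hg, degree_mul, degree_X_sub_C, degree_eq_natDegree hg0] at hNdeg
      rw [degree_eq_natDegree hg0]
      have : 1 + g.natDegree ≤ n := by exact_mod_cast hNdeg
      exact_mod_cast (by omega : g.natDegree < n)
  have hne : ∀ w ∈ measSupport μ, z - w ≠ 0 := fun w hw e => hz (by rwa [sub_eq_zero.1 e])
  have hinv : ContinuousOn (fun w => (z - w)⁻¹) (measSupport μ) :=
    ContinuousOn.inv₀ (by fun_prop) hne
  have h0 := h.integral_conj_mul_eq_zero hc n hgdeg
  -- the difference of the two sides is minus the integral in `h0`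
  rw [← sub_eq_zero, ← integral_const_mul, ← integral_const_mul, ← integral_sub, ← neg_eq_zero,
    ← integral_neg, ← h0]
  · apply integral_congr_ae
    filter_upwards [ae_mem_measSupport μ] with w hw
    have e := congrArg (eval w) hg
    simp only [hN, eval_sub, eval_mul, eval_C, eval_X] at e
    have hn := hne w hw
    have hsq : ((‖(p n).eval w‖ ^ 2 : ℝ) : ℂ) = (starRingEnd ℂ) ((p n).eval w) * (p n).eval w := by
      rw [Complex.conj_mul']; simp
    rw [hsq]
    field_simp
    linear_combination (-(starRingEnd ℂ) ((p n).eval w)) * e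
  · exact integrable_of_continuousOn_measSupport μ hc
      (continuousOn_const.mul (ContinuousOn.mul (by fun_prop) hinv))
  · exact integrable_of_continuousOn_measSupport μ hc
      (continuousOn_const.mul (ContinuousOn.mul (by fun_prop) hinv))

/-! ### The Cauchy kernel off the convex hull -/

lemma isCompact_convexJoin_complex {s t : Set ℂ} (hs : IsCompact s) (ht : IsCompact t) :
    IsCompact (convexJoin ℝ s t) := by
  have hcont : Continuous fun x : ℝ × ℂ × ℂ => (1 - x.1) • x.2.1 + x.1 • x.2.2 := by fun_prop
  convert ((isCompact_Icc (a := (0 : ℝ)) (b := 1)).prod (hs.prod ht)).image hcont using 1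
  ext x
  simp only [mem_convexJoin, segment_eq_image, Set.mem_image, Set.mem_prod, Prod.exists]
  constructor
  · rintro ⟨a, ha, b, hb, θ, hθ, rfl⟩
    exact ⟨θ, a, b, ⟨hθ, ha, hb⟩, rfl⟩
  · rintro ⟨θ, a, b, ⟨hθ, ha, hb⟩, rfl⟩
    exact ⟨a, ha, b, hb, θ, hθ, rfl⟩

/-- The convex hull of a compact set in the plane is compact: by Carathéodory's theorem it is the
union of the triangles with vertices in the set. -/
lemma isCompact_convexHull_complex {K : Set ℂ} (hK : IsCompact K) :
    IsCompact (convexHull ℝ K) := by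
  have hKc := isCompact_convexJoin_complex hK (isCompact_convexJoin_complex hK hK)
  convert hKc using 1
  apply Set.Subset.antisymm
  · intro x hx
    rw [convexHull_eq_union] at hx
    simp only [Set.mem_iUnion, exists_prop] at hx
    obtain ⟨t, htK, hind, hxt⟩ := hx
    have hcard : t.card ≤ 3 := by
      have h1 := hind.card_le_finrank_succ
      have h2 := Submodule.finrank_le (vectorSpan ℝ (Set.range ((↑) : t → ℂ)))
      rw [Complex.finrank_real_complex] at h2
      rw [Fintype.card_coe] at h1
      omega
    have hne : t.Nonempty := by
      rw [Finset.nonempty_iff_ne_empty]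
      rintro rfl
      simp at hxt
    obtain ⟨a, b, c, ha, hb, hc, hsub⟩ : ∃ a b c : ℂ, a ∈ t ∧ b ∈ t ∧ c ∈ t ∧
        (t : Set ℂ) ⊆ {a, b, c} := by
      have hpos := hne.card_pos
      obtain h | h | h : t.card = 1 ∨ t.card = 2 ∨ t.card = 3 := by omega
      · obtain ⟨a, rfl⟩ := Finset.card_eq_one.1 h
        exact ⟨a, a, a, by simp⟩
      · obtain ⟨a, b, -, rfl⟩ := Finset.card_eq_two.1 h
        exact ⟨a, b, b, by simp⟩
      · obtain ⟨a, b, c, -, -, -, rfl⟩ := Finset.card_eq_three.1 h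
        exact ⟨a, b, c, by simp⟩
    have hx3 := convexHull_mono hsub hxt
    rw [← convexJoin_singleton_segment, mem_convexJoin] at hx3
    obtain ⟨a', rfl, y, hy, hxy⟩ := hx3
    exact mem_convexJoin.2 ⟨a', htK ha, y, mem_convexJoin.2 ⟨b, htK hb, c, htK hc, hy⟩, hxy⟩
  · intro x hx
    obtain ⟨a, ha, y, hy, hxy⟩ := mem_convexJoin.1 hx
    obtain ⟨b, hb, c, hc, hybc⟩ := mem_convexJoin.1 hy
    have hconv := convex_convexHull ℝ K
    have hsub := subset_convexHull ℝ K
    exact hconv.segment_subset (hsub ha) (hconv.segment_subset (hsub hb) (hsub hc) hybc) hxy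

/-- Off the convex hull of a compact set `K`, the Cauchy kernel `w ↦ (z - w)⁻¹` maps `K` into a
half plane at positive distance from the origin. -/
lemma exists_re_mul_inv_sub_ge {K : Set ℂ} (hK : IsCompact K) {z : ℂ} (hz : z ∉ convexHull ℝ K) :
    ∃ a : ℂ, ∃ δ > 0, ∀ w ∈ K, δ ≤ (a * (z - w)⁻¹).re := by
  obtain ⟨f, u, hfu, huz⟩ := geometric_hahn_banach_closed_point (convex_convexHull ℝ K)
    (isCompact_convexHull_complex hK).isClosed hz
  obtain ⟨M, hM⟩ := hK.isBounded.exists_norm_le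
  set R := ‖z‖ + |M| + 1 with hR
  have hR0 : 0 < R := by positivity
  -- `f v = Re (conj a * v)` by real linearity
  set a : ℂ := ⟨f 1, f Complex.I⟩ with ha
  have hf : ∀ v : ℂ, f v = v.re * a.re + v.im * a.im := by
    intro v
    have : v = v.re • (1 : ℂ) + v.im • Complex.I := by
      simp [Complex.re_add_im]
    conv_lhs => rw [this]
    simp [ha, map_add, map_smul, -Complex.real_smul]
  refine ⟨a, (f z - u) / R ^ 2, div_pos (by linarith) (by positivity), fun w hw => ?_⟩
  have hfw := hfu w (subset_convexHull ℝ K hw)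
  have hne : z - w ≠ 0 := by
    intro e; rw [sub_eq_zero.1 e] at huz; linarith
  have hpos : 0 < Complex.normSq (z - w) := Complex.normSq_pos.2 hne
  have hle : Complex.normSq (z - w) ≤ R ^ 2 := by
    rw [Complex.normSq_eq_norm_sq]
    have := norm_sub_le z w
    have := hM w hw
    have := le_abs_self M
    gcongr
    linarith
  have hval : (a * (z - w)⁻¹).re = (f z - f w) / Complex.normSq (z - w) := by
    rw [← map_sub, hf (z - w)]
    simp only [Complex.mul_re, Complex.inv_re, Complex.inv_im]
    ring
  rw [hval]
  have : 0 < f z - u := by linarith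
  gcongr
  linarith

/-! ### Comparison of `q(z)` with `p_n(z)` -/

/-- Outside the convex hull of the support, `q(z) / p_n(z)` is controlled by `‖q‖_{L²(μ)}` with a
constant that does not depend on `n`. -/
lemma OrthonormalPolys.exists_norm_eval_le {μ : Measure ℂ} [IsFiniteMeasure μ]
    (hc : IsCompact (measSupport μ)) {p : ℕ → ℂ[X]} {κ : ℕ → ℝ}
    (h : OrthonormalPolys μ p κ) {z : ℂ} (hz : z ∉ convexHull ℝ (measSupport μ)) :
    ∃ A > 0, ∀ (n : ℕ) (q : ℂ[X]), q.degree < n → ∀ t > 0, ∫ w, ‖q.eval w‖ ^ 2 ∂μ ≤ t ^ 2 →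
      ‖q.eval z‖ ≤ A * t * ‖(p n).eval z‖ := by
  obtain ⟨a, δ, hδ, hre⟩ := exists_re_mul_inv_sub_ge hc hz
  have hz' : z ∉ measSupport μ := fun hm => hz (subset_convexHull ℝ _ hm)
  have hne : ∀ w ∈ measSupport μ, z - w ≠ 0 := fun w hw e => hz' (by rwa [sub_eq_zero.1 e])
  have hinv : ContinuousOn (fun w => (z - w)⁻¹) (measSupport μ) :=
    ContinuousOn.inv₀ (by fun_prop) hne
  obtain ⟨B, hB⟩ := hc.exists_bound_of_continuousOn hinv
  set D := |B| + 1
  have hD : 0 < D := by positivity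
  have hDle : ∀ w ∈ measSupport μ, ‖(z - w)⁻¹‖ ≤ D := fun w hw =>
    (hB w hw).trans ((le_abs_self B).trans (by simp [D]))
  refine ⟨(‖a‖ + 1) * D / δ, by positivity, fun n q hq t ht hqt => ?_⟩
  have hI : ∀ r : ℂ[X], Integrable (fun w => ‖r.eval w‖ ^ 2) μ :=
    fun r => integrable_of_continuousOn_measSupport μ hc (by fun_prop)
  have hid := h.eval_mul_integral hc n hq hz'
  set J := ∫ w, ((‖(p n).eval w‖ ^ 2 : ℝ) : ℂ) * (z - w)⁻¹ ∂μ with hJ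
  set L := ∫ w, (starRingEnd ℂ) ((p n).eval w) * q.eval w * (z - w)⁻¹ ∂μ with hL
  have hJi : Integrable (fun w => ((‖(p n).eval w‖ ^ 2 : ℝ) : ℂ) * (z - w)⁻¹) μ :=
    integrable_of_continuousOn_measSupport μ hc (ContinuousOn.mul (by fun_prop) hinv)
  have hJlow : δ ≤ ‖a‖ * ‖J‖ := by
    rw [← norm_mul]
    refine le_trans ?_ (Complex.re_le_norm _)
    have e : (a * J).re = ∫ w, (a * (((‖(p n).eval w‖ ^ 2 : ℝ) : ℂ) * (z - w)⁻¹)).re ∂μ := by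
      rw [hJ, ← integral_const_mul]
      exact (integral_re (hJi.const_mul a)).symm
    have e2 : δ = ∫ w, δ * ‖(p n).eval w‖ ^ 2 ∂μ := by
      rw [integral_const_mul, h.integral_norm_sq, mul_one]
    rw [e]
    nth_rewrite 1 [e2]
    refine integral_mono_ae ((hI _).const_mul δ) (hJi.const_mul a).re ?_
    filter_upwards [ae_mem_measSupport μ] with w hw
    have e3 : (a * (((‖(p n).eval w‖ ^ 2 : ℝ) : ℂ) * (z - w)⁻¹)).re =
        (a * (z - w)⁻¹).re * ‖(p n).eval w‖ ^ 2 := by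
      rw [mul_left_comm, Complex.re_ofReal_mul, mul_comm]
    show _ ≤ (a * (((‖(p n).eval w‖ ^ 2 : ℝ) : ℂ) * (z - w)⁻¹)).re
    rw [e3]
    exact mul_le_mul_of_nonneg_right (hre w hw) (by positivity)
  have hLup : ‖L‖ ≤ D * t := by
    -- Cauchy-Schwarz in the form `|p_n q| ≤ (t |p_n|² + |q|² / t) / 2`
    have hb : ‖L‖ ≤ ∫ w, (D * t / 2) * ‖(p n).eval w‖ ^ 2 + (D / (2 * t)) * ‖q.eval w‖ ^ 2 ∂μ := by
      refine norm_integral_le_of_norm_le (((hI _).const_mul _).add ((hI _).const_mul _)) ?_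
      filter_upwards [ae_mem_measSupport μ] with w hw
      rw [norm_mul, norm_mul, RCLike.norm_conj]
      set x := ‖(p n).eval w‖
      set y := ‖q.eval w‖
      have hxy : x * y ≤ t / 2 * x ^ 2 + 1 / (2 * t) * y ^ 2 := by
        have : t / 2 * x ^ 2 + 1 / (2 * t) * y ^ 2 - x * y = (t * x - y) ^ 2 / (2 * t) := by
          field_simp; ring
        have : 0 ≤ (t * x - y) ^ 2 / (2 * t) := by positivity
        linarith
      calc x * y * ‖(z - w)⁻¹‖ ≤ (t / 2 * x ^ 2 + 1 / (2 * t) * y ^ 2) * D :=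
            mul_le_mul hxy (hDle w hw) (norm_nonneg _) (by positivity)
        _ = _ := by ring
    rw [integral_add ((hI _).const_mul _) ((hI _).const_mul _), integral_const_mul,
      integral_const_mul, h.integral_norm_sq] at hb
    calc ‖L‖ ≤ _ := hb
      _ ≤ D * t / 2 * 1 + D / (2 * t) * t ^ 2 := by gcongr
      _ = D * t := by field_simp; ring
  have hnorm : ‖q.eval z‖ * ‖J‖ = ‖(p n).eval z‖ * ‖L‖ := by
    rw [← norm_mul, ← norm_mul, hid]
  have key : ‖q.eval z‖ * δ ≤ (‖a‖ + 1) * D * t * ‖(p n).eval z‖ := by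
    calc ‖q.eval z‖ * δ ≤ ‖q.eval z‖ * (‖a‖ * ‖J‖) := by gcongr
      _ = ‖a‖ * (‖(p n).eval z‖ * ‖L‖) := by rw [← hnorm]; ring
      _ ≤ (‖a‖ + 1) * (‖(p n).eval z‖ * (D * t)) := by gcongr; linarith
      _ = _ := by ring
  calc ‖q.eval z‖ ≤ ((‖a‖ + 1) * D * t * ‖(p n).eval z‖) / δ := (le_div_iff₀ hδ).2 key
    _ = _ := by ring

/-! ### Perturbation of the measure -/

/-- Pythagoras for `p_n(μ₁ + μ₂) = r p_n(μ₁) + q`, combined with monotonicity of the norm in the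
measure. -/
lemma integral_norm_sq_sub_le {μ₁ μ₂ : Measure ℂ} [IsFiniteMeasure μ₁] [IsFiniteMeasure μ₂]
    (hc₁ : IsCompact (measSupport μ₁)) (hc₂ : IsCompact (measSupport μ₂))
    {p₁ : ℕ → ℂ[X]} {κ₁ : ℕ → ℝ} (hON₁ : OrthonormalPolys μ₁ p₁ κ₁)
    {p : ℕ → ℂ[X]} {κ : ℕ → ℝ} (hON : OrthonormalPolys (μ₁ + μ₂) p κ) (n : ℕ) (r : ℝ)
    (hq : (p n - C (r : ℂ) * p₁ n).degree < n) :
    ∫ w, ‖(p n - C (r : ℂ) * p₁ n).eval w‖ ^ 2 ∂μ₁ ≤ 1 - r ^ 2 := by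
  set q := p n - C (r : ℂ) * p₁ n with hqdef
  have hI : ∀ s : ℂ[X], Integrable (fun w => ‖s.eval w‖ ^ 2) μ₁ :=
    fun s => integrable_of_continuousOn_measSupport μ₁ hc₁ (by fun_prop)
  have hI₂ : ∀ s : ℂ[X], Integrable (fun w => ‖s.eval w‖ ^ 2) μ₂ :=
    fun s => integrable_of_continuousOn_measSupport μ₂ hc₂ (by fun_prop)
  have hX : Integrable (fun w => (starRingEnd ℂ) ((p₁ n).eval w) * q.eval w) μ₁ :=
    integrable_of_continuousOn_measSupport μ₁ hc₁ (by fun_prop)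
  have hcross : ∫ w, ((starRingEnd ℂ) ((p₁ n).eval w) * q.eval w).re ∂μ₁ = 0 := by
    have := integral_re hX
    rw [hON₁.integral_conj_mul_eq_zero hc₁ n hq] at this
    simpa using this
  have hXre : Integrable
      (fun w => 2 * r * ((starRingEnd ℂ) ((p₁ n).eval w) * q.eval w).re) μ₁ := hX.re.const_mul _
  have hsumI : Integrable
      (fun w => ‖q.eval w‖ ^ 2 + r ^ 2 * ‖(p₁ n).eval w‖ ^ 2) μ₁ := (hI _).add ((hI _).const_mul _)
  have hpt : ∀ w, ‖(p n).eval w‖ ^ 2 = (‖q.eval w‖ ^ 2 + r ^ 2 * ‖(p₁ n).eval w‖ ^ 2) +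
      2 * r * ((starRingEnd ℂ) ((p₁ n).eval w) * q.eval w).re := by
    intro w
    have : (p n).eval w = q.eval w + r * (p₁ n).eval w := by simp [hqdef]
    rw [this]
    simp only [← Complex.normSq_eq_norm_sq, Complex.normSq_apply, Complex.add_re, Complex.add_im,
      Complex.mul_re, Complex.mul_im, Complex.ofReal_re, Complex.ofReal_im, Complex.conj_re,
      Complex.conj_im]
    ring
  have h1 : ∫ w, ‖(p n).eval w‖ ^ 2 ∂μ₁ = ∫ w, ‖q.eval w‖ ^ 2 ∂μ₁ + r ^ 2 := by
    simp only [hpt]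
    rw [integral_add hsumI hXre,
      integral_add (hI _) ((hI _).const_mul _), integral_const_mul, integral_const_mul, hcross,
      hON₁.integral_norm_sq]
    simp
  have h2 := hON.integral_norm_sq n
  rw [integral_add_measure (hI _) (hI₂ _)] at h2
  have h3 : 0 ≤ ∫ w, ‖(p n).eval w‖ ^ 2 ∂μ₂ := integral_nonneg fun w => by positivity
  linarith

theorem stability_under_norm_preserving_perturbation
    (μ₁ μ₂ : Measure ℂ) [IsFiniteMeasure μ₁] [IsFiniteMeasure μ₂]
    (hc₁ : IsCompact (measSupport μ₁)) (hi₁ : (measSupport μ₁).Infinite)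
    (hc₂ : IsCompact (measSupport μ₂))
    (p₁ : ℕ → Polynomial ℂ) (κ₁ : ℕ → ℝ) (hON₁ : OrthonormalPolys μ₁ p₁ κ₁)
    (p : ℕ → Polynomial ℂ) (κ : ℕ → ℝ) (hON : OrthonormalPolys (μ₁ + μ₂) p κ)
    (hnorm : Tendsto
      (fun n => Real.sqrt (∫ z, ‖(p₁ n).eval z / (κ₁ n : ℂ)‖ ^ 2 ∂μ₁) /
                Real.sqrt (∫ z, ‖(p n).eval z / (κ n : ℂ)‖ ^ 2 ∂(μ₁ + μ₂)))
      atTop (𝓝 1)) :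
    ∀ z ∉ convexHull ℝ (measSupport μ₁),
      Tendsto (fun n => (p n).eval z / (p₁ n).eval z) atTop (𝓝 1) := by
  intro z hz
  simp only [hON₁.sqrt_integral_monic, hON.sqrt_integral_monic] at hnorm
  set r : ℕ → ℝ := fun n => (κ₁ n)⁻¹ / (κ n)⁻¹ with hr
  set q : ℕ → ℂ[X] := fun n => p n - C (r n : ℂ) * p₁ n with hqdef
  have hqdeg : ∀ n, (q n).degree < n := by
    intro n
    have h1 : (p n).degree < (n + 1 : ℕ) := by
      rw [hON.1 n]; exact_mod_cast Nat.lt_succ_self n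
    have h2 := degree_sub_C_mul_lt h1 (hON₁.1 n)
    have h3 : (p n).coeff n = κ n := by
      rw [← hON.2.2.1 n, leadingCoeff, natDegree_eq_of_degree_eq_some (hON.1 n)]
    have h4 : ((r n : ℝ) : ℂ) = (p n).coeff n / (p₁ n).leadingCoeff := by
      rw [h3, hON₁.2.2.1 n]
      simp [hr, div_eq_mul_inv, mul_comm]
    rw [← h4] at h2
    exact h2
  obtain ⟨A, hA, hbound⟩ := hON₁.exists_norm_eval_le hc₁ hz
  have hp0 : ∀ n, 1 ≤ n → (p₁ n).eval z ≠ 0 := by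
    intro n hn h0
    have hd : (1 : ℂ[X]).degree < n := by
      rw [degree_one]; exact_mod_cast hn
    -- any `t` with `‖1‖² ≤ t²` will do
    have := hbound n 1 hd ((∫ w, ‖(1 : ℂ[X]).eval w‖ ^ 2 ∂μ₁) + 1)
      (by have : 0 ≤ ∫ w, ‖(1 : ℂ[X]).eval w‖ ^ 2 ∂μ₁ := integral_nonneg fun w => by positivity
          linarith)
      (by have : 0 ≤ ∫ w, ‖(1 : ℂ[X]).eval w‖ ^ 2 ∂μ₁ := integral_nonneg fun w => by positivity
          nlinarith)
    rw [h0] at this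
    simp at this
    linarith
  have hsmall : Tendsto (fun n => (q n).eval z / (p₁ n).eval z) atTop (𝓝 0) := by
    rw [Metric.tendsto_atTop']
    intro ε hε
    have ht : 0 < ε / (2 * A) := by positivity
    have hlim : Tendsto (fun n => 1 - r n ^ 2) atTop (𝓝 0) := by
      simpa using (hnorm.pow 2).const_sub 1
    obtain ⟨N, hN⟩ := eventually_atTop.1
      (hlim.eventually (gt_mem_nhds (by positivity : 0 < (ε / (2 * A)) ^ 2)))
    refine ⟨N, fun n hn => ?_⟩
    have hn1 : 1 ≤ n := by omega
    have h1 := hbound n (q n) (hqdeg n) _ ht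
      ((integral_norm_sq_sub_le hc₁ hc₂ hON₁ hON n (r n) (hqdeg n)).trans (hN n (le_of_lt hn)).le)
    have hpos : 0 < ‖(p₁ n).eval z‖ := norm_pos_iff.2 (hp0 n hn1)
    rw [dist_zero_right, norm_div, div_lt_iff₀ hpos]
    refine h1.trans_lt ?_
    have : A * (ε / (2 * A)) = ε / 2 := by field_simp
    rw [this]
    gcongr
    linarith
  have hsum : Tendsto (fun n => (r n : ℂ) + (q n).eval z / (p₁ n).eval z) atTop (𝓝 1) := by
    have h1 : Tendsto (fun n => (r n : ℂ)) atTop (𝓝 ((1 : ℝ) : ℂ)) :=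
      (Complex.continuous_ofReal.tendsto 1).comp hnorm
    simpa using h1.add hsmall
  refine hsum.congr' ?_
  filter_upwards [eventually_ge_atTop 1] with n hn
  have := hp0 n hn
  simp only [hqdef, eval_sub, eval_mul, eval_C]
  field_simp
  ring
end
end

section
/- Let μ be a finite positive Borel measure on ℂ with compact infinite support, let x ∈ ℂ satisfy |p_n(x;μ)|² / K_{n−1}(x,x;μ) → 0 as n → ∞, and define the Christoffel transform dν^x(z) = |z−x|² dμ(z). Then (z−x) p_{n−1}(z;ν^x) / p_n(z;μ) → 1 as n → ∞, uniformly on every compact subset of ℂ ∖ ch(μ). -/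
/-!
The polynomial `G_n = p_n - (p_n(x) / K_{n-1}(x,x)) K_{n-1}(·, x)` vanishes at `x` and is orthogonal
in `L²(μ)` to every polynomial of degree less than `n` vanishing at `x`. Hence it equals
`a_n (z - x) q_{n-1}` with `a_n > 0`, and comparing norms gives `a_n² = 1 + ε_n`, where
`ε_n = |p_n(x)|² / K_{n-1}(x,x)` (`christoffel_formula`). Therefore
`(z - x) q_{n-1}(z) / p_n(z) = a_n⁻¹ (1 - p_n(x) K_{n-1}(z,x) / (K_{n-1}(x,x) p_n(z)))`.

Since `ε_n → 0`, one has `a_n → 1`, and it remains to bound `K_{n-1}(z,x)` by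
`M √K_{n-1}(x,x) |p_n(z)|` with `M` uniform for `z` in `K`. As `K_{n-1}(·,x)` has squared norm
`K_{n-1}(x,x)`, this follows from the estimate `|f(z)| ≤ M ‖f‖ |p_n(z)|`, valid for all polynomials
`f` of degree less than `n` (`norm_eval_le_of_separated`). Its proof pairs `p_n` with the polynomial
`w ↦ (p_n(z) f(w) - f(z) p_n(w)) / (w - z)`, of degree less than `n`: orthogonality gives
`f(z) ∫ |p_n|² / (w - z) dμ = p_n(z) ∫ conj p_n f / (w - z) dμ`. The left integral is bounded below
because a line separates `z` from the convex hull of the support, and the right one is bounded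
above by the Cauchy–Schwarz inequality. Uniformity in `z` needs the convex hull of a compact set to
be compact, which follows from Carathéodory's theorem
(`isCompact_convexHull_of_finiteDimensional`).
-/

open MeasureTheory Filter Topology Polynomial

noncomputable section

/-! ### Convex geometry -/

lemma isCompact_convexJoin {E : Type*} [NormedAddCommGroup E] [NormedSpace ℝ E] {s t : Set E}
    (hs : IsCompact s) (ht : IsCompact t) : IsCompact (convexJoin ℝ s t) := by
  have h : convexJoin ℝ s t =
      (fun a : (E × E) × ℝ => AffineMap.lineMap a.1.1 a.1.2 a.2) ''
        ((s ×ˢ t) ×ˢ Set.Icc (0 : ℝ) 1) := by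
    ext y
    simp only [mem_convexJoin, segment_eq_image_lineMap, Set.mem_image, Set.mem_prod, Prod.exists]
    constructor
    · rintro ⟨a, ha, b, hb, r, hr, rfl⟩
      exact ⟨a, b, r, ⟨⟨ha, hb⟩, hr⟩, rfl⟩
    · rintro ⟨a, b, r, ⟨⟨ha, hb⟩, hr⟩, rfl⟩
      exact ⟨a, ha, b, hb, r, hr, rfl⟩
  rw [h]
  refine ((hs.prod ht).prod isCompact_Icc).image ?_
  simp only [AffineMap.lineMap_apply_module']
  fun_prop

/-- The `n`-fold join of a compact set `s` with itself is a compact set lying in the convex hull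
and containing all simplices with at most `n + 1` vertices in `s`. -/
lemma exists_compact_between_simplices_convexHull {E : Type*} [NormedAddCommGroup E]
    [NormedSpace ℝ E] {s : Set E} (hs : IsCompact s) (hne : s.Nonempty) (n : ℕ) :
    ∃ F : Set E, IsCompact F ∧ F ⊆ convexHull ℝ s ∧ s ⊆ F ∧
      ∀ t : Finset E, (t : Set E) ⊆ s → t.card ≤ n + 1 → convexHull ℝ (t : Set E) ⊆ F := by
  classical
  induction n with
  | zero =>
    refine ⟨s, hs, subset_convexHull ℝ s, subset_rfl, fun t hts hcard => ?_⟩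
    rcases t.eq_empty_or_nonempty with rfl | htne
    · simp
    · obtain ⟨a, rfl⟩ := Finset.card_eq_one.1 (le_antisymm hcard htne.card_pos)
      simpa using hts
  | succ n ih =>
    obtain ⟨F, hF, hFs, hsF, hFt⟩ := ih
    refine ⟨convexJoin ℝ s F, isCompact_convexJoin hs hF,
      convexJoin_subset (subset_convexHull ℝ s) hFs (convex_convexHull ℝ s),
      hsF.trans (subset_convexJoin_right hne), fun t hts hcard => ?_⟩
    rcases t.eq_empty_or_nonempty with rfl | ⟨a, ha⟩
    · simp
    · have hins : insert a (t.erase a) = t := Finset.insert_erase ha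
      have hsub : ((t.erase a : Finset E) : Set E) ⊆ s :=
        (Finset.coe_subset.2 (Finset.erase_subset a t)).trans hts
      have hc : (t.erase a).card ≤ n + 1 := by
        rw [Finset.card_erase_of_mem ha]; omega
      rcases (t.erase a).eq_empty_or_nonempty with h0 | h0
      · rw [← hins, h0]
        simpa using (hsF.trans (subset_convexJoin_right hne)) (hts ha)
      · rw [← hins, Finset.coe_insert, convexHull_insert (by exact_mod_cast h0)]
        exact convexJoin_mono (Set.singleton_subset_iff.2 (hts ha)) (hFt _ hsub hc)

/-- By Carathéodory's theorem, the convex hull of a compact set in finite dimension is compact. -/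
lemma isCompact_convexHull_of_finiteDimensional {E : Type*} [NormedAddCommGroup E]
    [NormedSpace ℝ E] [FiniteDimensional ℝ E] {s : Set E} (hs : IsCompact s) :
    IsCompact (convexHull ℝ s) := by
  rcases s.eq_empty_or_nonempty with rfl | hne
  · simp
  obtain ⟨F, hF, hFs, -, hFt⟩ :=
    exists_compact_between_simplices_convexHull hs hne (Module.finrank ℝ E)
  convert hF
  refine subset_antisymm ?_ hFs
  rw [convexHull_eq_union]
  refine Set.iUnion_subset fun t => Set.iUnion_subset fun hts => Set.iUnion_subset fun hind =>
    hFt t hts ?_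
  have := hind.card_le_finrank_succ
  rw [Fintype.card_coe] at this
  exact this.trans (Nat.succ_le_succ (Submodule.finrank_le _))

/-- A point at distance at least `δ` from a compact convex set `C` is separated from it by a strip
of width `δ`; the unit normal `u` points from `z₀` to the nearest point of `C`. -/
lemma exists_unit_separating {C : Set ℂ} (hC : IsCompact C) (hconv : Convex ℝ C)
    (hne : C.Nonempty) {z₀ : ℂ} {δ : ℝ} (hδ : 0 < δ) (hd : ∀ w ∈ C, δ ≤ ‖w - z₀‖) :
    ∃ u : ℂ, ‖u‖ = 1 ∧ ∀ w ∈ C, δ ≤ ((starRingEnd ℂ) u * (w - z₀)).re := by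
  obtain ⟨a, haC, ha⟩ := exists_norm_eq_iInf_of_complete_convex hne hC.isComplete hconv z₀
  rw [norm_eq_iInf_iff_real_inner_le_zero hconv haC] at ha
  set v := a - z₀ with hv
  have hvδ : δ ≤ ‖v‖ := hd a haC
  have hv0 : 0 < ‖v‖ := hδ.trans_le hvδ
  refine ⟨v / ‖v‖, by simp [hv0.ne'], fun w hw => ?_⟩
  have h1 := ha w hw
  rw [Complex.inner] at h1
  have h2 : ((starRingEnd ℂ) v * (w - z₀)).re
      = ‖v‖ ^ 2 - ((w - a) * (starRingEnd ℂ) (z₀ - a)).re := by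
    rw [← Complex.normSq_eq_norm_sq, Complex.normSq_apply, hv]
    simp
    ring
  have h3 : ((starRingEnd ℂ) (v / ‖v‖) * (w - z₀)).re
      = ((starRingEnd ℂ) v * (w - z₀)).re / ‖v‖ := by
    rw [map_div₀, Complex.conj_ofReal, div_mul_eq_mul_div, Complex.div_ofReal_re]
  rw [h3, le_div_iff₀ hv0, h2]
  nlinarith

/-! ### The pairing on polynomials -/

/-- The sesquilinear pairing of two polynomials in `L²(μ)`, conjugate-linear in the first
argument. It is only meaningful if all the integrands are integrable, which is the hypothesis
`PolyIntegrable μ` below. -/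
def ip (μ : Measure ℂ) (f g : ℂ[X]) : ℂ := ∫ z, (starRingEnd ℂ) (f.eval z) * g.eval z ∂μ

/-- The condition that all products of a polynomial with the conjugate of another are `μ`-integrable. -/
def PolyIntegrable (μ : Measure ℂ) : Prop :=
  ∀ f g : ℂ[X], Integrable (fun z => (starRingEnd ℂ) (f.eval z) * g.eval z) μ

lemma polyIntegrable_of_compact {μ : Measure ℂ} [IsFiniteMeasure μ]
    (hc : IsCompact (measSupport μ)) : PolyIntegrable μ := by
  intro f g
  have hcont : Continuous (fun z => (starRingEnd ℂ) (f.eval z) * g.eval z) :=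
    (Complex.continuous_conj.comp f.continuous).mul g.continuous
  obtain ⟨C, hC⟩ := hc.exists_bound_of_continuousOn hcont.continuousOn
  refine Integrable.of_bound hcont.aestronglyMeasurable C ?_
  filter_upwards [ae_mem_measSupport μ] with z hz using hC z hz

section Pairing

variable {μ : Measure ℂ}

lemma ip_add_right (hI : PolyIntegrable μ) (f g h : ℂ[X]) :
    ip μ f (g + h) = ip μ f g + ip μ f h := by
  unfold ip
  rw [← integral_add (hI f g) (hI f h)]
  simp only [eval_add, mul_add]

lemma ip_C_mul_right (f g : ℂ[X]) (c : ℂ) : ip μ f (C c * g) = c * ip μ f g := by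
  unfold ip
  rw [← integral_const_mul]
  simp only [eval_mul, eval_C]
  congr 1; ext z; ring

lemma ip_zero_right (f : ℂ[X]) : ip μ f 0 = 0 := by simp [ip]

lemma ip_sub_right (hI : PolyIntegrable μ) (f g h : ℂ[X]) :
    ip μ f (g - h) = ip μ f g - ip μ f h := by
  have : g - h = g + C (-1) * h := by simp [sub_eq_add_neg]
  rw [this, ip_add_right hI, ip_C_mul_right]; ring

lemma conj_ip (f g : ℂ[X]) : (starRingEnd ℂ) (ip μ f g) = ip μ g f := by
  unfold ip
  rw [← integral_conj]
  congr 1; ext z; simp [mul_comm]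

lemma ip_sum_right (hI : PolyIntegrable μ) {ι : Type*} (f : ℂ[X]) (s : Finset ι) (g : ι → ℂ[X]) :
    ip μ f (∑ i ∈ s, g i) = ∑ i ∈ s, ip μ f (g i) := by
  classical
  induction s using Finset.induction_on with
  | empty => simp [ip_zero_right]
  | insert a s ha ih => rw [Finset.sum_insert ha, ip_add_right hI, ih, Finset.sum_insert ha]

lemma ip_self (f : ℂ[X]) : ip μ f f = ((∫ z, ‖f.eval z‖ ^ 2 ∂μ : ℝ) : ℂ) := by
  unfold ip
  rw [← integral_complex_ofReal]
  congr 1; ext z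
  rw [Complex.conj_mul']; push_cast; rfl

lemma integrable_norm_sq (hI : PolyIntegrable μ) (f : ℂ[X]) :
    Integrable (fun z => ‖f.eval z‖ ^ 2) μ := by
  convert (hI f f).norm using 2 with z
  rw [norm_mul, RCLike.norm_conj, sq]

variable {p : ℕ → ℂ[X]} {κ : ℕ → ℝ}

lemma OrthonormalPolys.ip_eq (hON : OrthonormalPolys μ p κ) (n m : ℕ) :
    ip μ (p n) (p m) = if n = m then 1 else 0 := hON.2.2.2 n m

/-- Fourier expansion of a polynomial in the orthonormal polynomials. -/
lemma OrthonormalPolys.expansion (hI : PolyIntegrable μ) (hON : OrthonormalPolys μ p κ) {n : ℕ}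
    {r : ℂ[X]} (hr : r.degree < n) :
    r = ∑ j ∈ Finset.range n, C (ip μ (p j) r) * p j := by
  let S : Polynomial.Sequence ℂ := ⟨p, hON.1⟩
  have hspan := S.span_degreeLT (m := n)
    (fun i _ => (leadingCoeff_ne_zero.2 (S.ne_zero i)).isUnit)
  have hmem : r ∈ Submodule.span ℂ ((S : ℕ → ℂ[X]) '' Set.Iio n) := by
    rw [hspan]; exact mem_degreeLT.2 hr
  clear hr
  induction hmem using Submodule.span_induction with
  | mem f hf =>
    obtain ⟨i, hi, rfl⟩ := hf
    change p i = ∑ j ∈ Finset.range n, C (ip μ (p j) (p i)) * p j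
    rw [Finset.sum_eq_single_of_mem i (Finset.mem_range.2 hi)]
    · rw [hON.ip_eq]; simp
    · intro j _ hj
      rw [hON.ip_eq]; simp [hj]
  | zero => simp [ip_zero_right]
  | add f g _ _ hf hg =>
    conv_lhs => rw [hf, hg]
    simp only [ip_add_right hI, C_add, add_mul, Finset.sum_add_distrib]
  | smul c f _ hf =>
    conv_lhs => rw [hf]
    simp only [smul_eq_C_mul, ip_C_mul_right, C_mul, Finset.mul_sum, mul_assoc]

lemma OrthonormalPolys.ip_eq_zero (hI : PolyIntegrable μ) (hON : OrthonormalPolys μ p κ) {n : ℕ}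
    {r : ℂ[X]} (hr : r.degree < n) : ip μ (p n) r = 0 := by
  rw [hON.expansion hI hr, ip_sum_right hI]
  refine Finset.sum_eq_zero fun j hj => ?_
  rw [ip_C_mul_right, hON.ip_eq, if_neg (Finset.mem_range.1 hj).ne', mul_zero]

/-- The reproducing kernel `K_{n-1}(·, x) = ∑_{j < n} conj (p_j(x)) p_j`. -/
def kern (p : ℕ → ℂ[X]) (n : ℕ) (x : ℂ) : ℂ[X] :=
  ∑ j ∈ Finset.range n, C ((starRingEnd ℂ) ((p j).eval x)) * p j

lemma kern_degree_lt (hON : OrthonormalPolys μ p κ) (n : ℕ) (x : ℂ) :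
    (kern p n x).degree < n := by
  rw [← mem_degreeLT]
  refine Submodule.sum_mem _ fun j hj => ?_
  rw [← smul_eq_C_mul]
  refine Submodule.smul_mem _ _ (mem_degreeLT.2 ?_)
  rw [hON.1 j]
  exact_mod_cast Finset.mem_range.1 hj

lemma eval_kern_self (p : ℕ → ℂ[X]) (n : ℕ) (x : ℂ) :
    (kern p n x).eval x = ((∑ j ∈ Finset.range n, ‖(p j).eval x‖ ^ 2 : ℝ) : ℂ) := by
  simp [kern, eval_finsetSum, Complex.conj_mul']

lemma ip_kern (hI : PolyIntegrable μ) (hON : OrthonormalPolys μ p κ) {n : ℕ} (x : ℂ)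
    {r : ℂ[X]} (hr : r.degree < n) : ip μ (kern p n x) r = r.eval x := by
  have h : ip μ r (kern p n x) = (starRingEnd ℂ) (r.eval x) := by
    conv_rhs => rw [hON.expansion hI hr]
    rw [kern, ip_sum_right hI, eval_finsetSum, map_sum]
    refine Finset.sum_congr rfl fun j _ => ?_
    rw [ip_C_mul_right, eval_mul, eval_C, map_mul, conj_ip, mul_comm]
  rw [← conj_ip, h, Complex.conj_conj]

end Pairing

/-! ### Growth of `p_n` off the convex hull -/

lemma degree_C_mul_le_degree (c : ℂ) (f : ℂ[X]) : (C c * f).degree ≤ f.degree := by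
  rw [← smul_eq_C_mul]
  exact degree_smul_le c f

lemma re_mul_inv_lower_bound {u v : ℂ} {δ D : ℝ} (hδ : 0 < δ) (hu : ‖u‖ = 1)
    (hre : δ ≤ ((starRingEnd ℂ) u * v).re) (hD : ‖v‖ ≤ D) :
    δ ≤ ‖v‖ ∧ δ / D ^ 2 ≤ (u * v⁻¹).re := by
  have h1 : δ ≤ ‖v‖ := by
    refine hre.trans ((Complex.re_le_norm _).trans ?_)
    rw [norm_mul, RCLike.norm_conj, hu, one_mul]
  refine ⟨h1, ?_⟩
  have h2 : (u * v⁻¹).re = ((starRingEnd ℂ) u * v).re / ‖v‖ ^ 2 := by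
    rw [Complex.inv_def, ← mul_assoc, Complex.re_mul_ofReal,
      Complex.normSq_eq_norm_sq, div_eq_mul_inv]
    congr 1
    simp
  rw [h2]
  have hv : 0 < ‖v‖ := hδ.trans_le h1
  have hnn : 0 ≤ ((starRingEnd ℂ) u * v).re := hδ.le.trans hre
  gcongr

/-- The product of a polynomial pairing with the Cauchy kernel is integrable when `z₀` stays at
positive distance from the support. -/
lemma integrable_cauchy {μ : Measure ℂ} (hI : PolyIntegrable μ) {z₀ : ℂ} {δ : ℝ} (hδ : 0 < δ)
    (hae : ∀ᵐ w ∂μ, δ ≤ ‖w - z₀‖) (f g : ℂ[X]) :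
    Integrable (fun w => (w - z₀)⁻¹ * ((starRingEnd ℂ) (f.eval w) * g.eval w)) μ := by
  refine (hI f g).bdd_mul (c := δ⁻¹) ?_ ?_
  · exact (measurable_id.sub_const z₀).inv.aestronglyMeasurable
  · filter_upwards [hae] with w hw
    rw [norm_inv]
    exact inv_anti₀ hδ hw

/-- Since `p_n` is orthogonal to the polynomial `(p_n(z₀) f - f(z₀) p_n) / (z - z₀)`, the value
`f(z₀)` is determined by Cauchy transforms of `conj p_n * f` and `|p_n|²`. -/
lemma eval_mul_cauchy_eq {μ : Measure ℂ} (hI : PolyIntegrable μ) {p : ℕ → ℂ[X]} {κ : ℕ → ℝ}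
    (hON : OrthonormalPolys μ p κ) {n : ℕ} {f : ℂ[X]} (hf : f.degree < n) {z₀ : ℂ}
    {δ : ℝ} (hδ : 0 < δ) (hae : ∀ᵐ w ∂μ, δ ≤ ‖w - z₀‖) :
    f.eval z₀ * ∫ w, (w - z₀)⁻¹ * ((starRingEnd ℂ) ((p n).eval w) * (p n).eval w) ∂μ
      = (p n).eval z₀ *
        ∫ w, (w - z₀)⁻¹ * ((starRingEnd ℂ) ((p n).eval w) * f.eval w) ∂μ := by
  set R : ℂ[X] := C ((p n).eval z₀) * f - C (f.eval z₀) * p n with hR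
  obtain ⟨S, hS⟩ : (X - C z₀) ∣ R := by
    rw [dvd_iff_isRoot, IsRoot.def, hR]
    simp [mul_comm]
  have hSdeg : S.degree < n := by
    have hRdeg : R.degree ≤ n := by
      refine (degree_sub_le _ _).trans (max_le ?_ ?_)
      · exact (degree_C_mul_le_degree _ _).trans hf.le
      · exact (degree_C_mul_le_degree _ _).trans (hON.1 n).le
    rw [hS, degree_mul, degree_X_sub_C] at hRdeg
    by_cases hS0 : S = 0
    · rw [hS0, degree_zero]; exact WithBot.bot_lt_coe n
    · rw [degree_eq_natDegree hS0] at hRdeg ⊢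
      norm_cast at hRdeg ⊢
      omega
  have h0 : ∫ w, ((p n).eval z₀ * ((w - z₀)⁻¹ * ((starRingEnd ℂ) ((p n).eval w) * f.eval w))
      - f.eval z₀ * ((w - z₀)⁻¹ * ((starRingEnd ℂ) ((p n).eval w) * (p n).eval w))) ∂μ = 0 := by
    rw [← hON.ip_eq_zero hI hSdeg]
    refine integral_congr_ae ?_
    filter_upwards [hae] with w hw
    have hw0 : w - z₀ ≠ 0 := norm_pos_iff.1 (hδ.trans_le hw)
    have hSw : S.eval w = (w - z₀)⁻¹ * ((p n).eval z₀ * f.eval w - f.eval z₀ * (p n).eval w) := by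
      have := congrArg (eval w) hS
      simp only [hR, eval_sub, eval_mul, eval_C, eval_X] at this
      rw [this, inv_mul_cancel_left₀ hw0]
    simp only [hSw]
    ring
  rw [integral_sub ((integrable_cauchy hI hδ hae _ _).const_mul _)
    ((integrable_cauchy hI hδ hae _ _).const_mul _), integral_const_mul, integral_const_mul,
    sub_eq_zero] at h0
  exact h0.symm

/-- Off the convex hull of the support, `p_n` dominates every polynomial `f` of degree less than
`n`, with a constant depending only on the width `δ` of the separating strip and the distance
bound `D`. -/
lemma norm_eval_le_of_separated {μ : Measure ℂ} (hI : PolyIntegrable μ) {p : ℕ → ℂ[X]}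
    {κ : ℕ → ℝ} (hON : OrthonormalPolys μ p κ) {n : ℕ} {f : ℂ[X]} (hf : f.degree < n)
    {z₀ u : ℂ} {δ D N : ℝ} (hδ : 0 < δ) (hu : ‖u‖ = 1) (hDpos : 0 < D)
    (hae : ∀ᵐ w ∂μ, δ ≤ ((starRingEnd ℂ) u * (w - z₀)).re ∧ ‖w - z₀‖ ≤ D)
    (hN : 0 < N) (hfN : ∫ w, ‖f.eval w‖ ^ 2 ∂μ ≤ N ^ 2) :
    ‖f.eval z₀‖ ≤ D ^ 2 / δ ^ 2 * N * ‖(p n).eval z₀‖ := by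
  have hae1 : ∀ᵐ w ∂μ, δ ≤ ‖w - z₀‖ := by
    filter_upwards [hae] with w hw using (re_mul_inv_lower_bound hδ hu hw.1 hw.2).1
  have hnorm : ∫ w, ‖(p n).eval w‖ ^ 2 ∂μ = 1 := by
    have := hON.ip_eq n n
    rw [ip_self, if_pos rfl] at this
    exact_mod_cast this
  have heq := eval_mul_cauchy_eq hI hON hf hδ hae1
  set I := ∫ w, (w - z₀)⁻¹ * ((starRingEnd ℂ) ((p n).eval w) * (p n).eval w) ∂μ with hIdef
  set J := ∫ w, (w - z₀)⁻¹ * ((starRingEnd ℂ) ((p n).eval w) * f.eval w) ∂μ with hJdef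
  -- The Cauchy kernel has real part at least `δ / D²` in the direction `u`.
  have hIlow : δ / D ^ 2 ≤ ‖I‖ := by
    have hint := (integrable_cauchy hI hδ hae1 (p n) (p n)).const_mul u
    calc δ / D ^ 2 = ∫ w, δ / D ^ 2 * ‖(p n).eval w‖ ^ 2 ∂μ := by
          rw [integral_const_mul, hnorm, mul_one]
      _ ≤ ∫ w, (u * ((w - z₀)⁻¹ * ((starRingEnd ℂ) ((p n).eval w) * (p n).eval w))).re ∂μ := by
          refine integral_mono_ae ((integrable_norm_sq hI _).const_mul _) hint.re ?_
          filter_upwards [hae] with w hw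
          have h := (re_mul_inv_lower_bound hδ hu hw.1 hw.2).2
          rw [Complex.conj_mul', ← mul_assoc, ← Complex.ofReal_pow, Complex.re_mul_ofReal]
          gcongr
      _ = (u * I).re := by
          rw [hIdef, ← integral_const_mul]
          exact integral_re hint
      _ ≤ ‖I‖ := by
          refine (Complex.re_le_norm _).trans ?_
          rw [norm_mul, hu, one_mul]
  have hJup : ‖J‖ ≤ N / δ := by
    calc ‖J‖ ≤ ∫ w, δ⁻¹ * (N / 2 * ‖(p n).eval w‖ ^ 2 + 1 / (2 * N) * ‖f.eval w‖ ^ 2) ∂μ := by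
          refine norm_integral_le_of_norm_le ((((integrable_norm_sq hI _).const_mul _).add
            ((integrable_norm_sq hI _).const_mul _)).const_mul _) ?_
          filter_upwards [hae1] with w hw
          rw [norm_mul, norm_mul, norm_inv, RCLike.norm_conj]
          refine mul_le_mul (inv_anti₀ hδ hw) ?_ (by positivity) (by positivity)
          -- weighted arithmetic-geometric mean inequality
          have h : N / 2 * ‖(p n).eval w‖ ^ 2 + 1 / (2 * N) * ‖f.eval w‖ ^ 2
              - ‖(p n).eval w‖ * ‖f.eval w‖
              = (N * ‖(p n).eval w‖ - ‖f.eval w‖) ^ 2 / (2 * N) := by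
            field_simp
            ring
          have h' : 0 ≤ (N * ‖(p n).eval w‖ - ‖f.eval w‖) ^ 2 / (2 * N) := by positivity
          linarith
      _ = δ⁻¹ * (N / 2 + 1 / (2 * N) * ∫ w, ‖f.eval w‖ ^ 2 ∂μ) := by
          rw [integral_const_mul, integral_add ((integrable_norm_sq hI _).const_mul _)
            ((integrable_norm_sq hI _).const_mul _), integral_const_mul, integral_const_mul,
            hnorm, mul_one]
      _ ≤ δ⁻¹ * (N / 2 + 1 / (2 * N) * N ^ 2) := by gcongr
      _ = N / δ := by field_simp; ring
  have h3 : ‖f.eval z₀‖ * (δ / D ^ 2) ≤ ‖(p n).eval z₀‖ * (N / δ) := by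
    calc ‖f.eval z₀‖ * (δ / D ^ 2) ≤ ‖f.eval z₀‖ * ‖I‖ := by gcongr
      _ = ‖(p n).eval z₀‖ * ‖J‖ := by rw [← norm_mul, heq, norm_mul]
      _ ≤ _ := by gcongr
  rw [mul_div_assoc', div_le_iff₀ (by positivity)] at h3
  rw [← mul_le_mul_iff_left₀ hδ]
  refine h3.trans (le_of_eq ?_)
  field_simp

/-! ### The Christoffel transform -/

lemma ip_withDensity (μ : Measure ℂ) (x : ℂ) (f g : ℂ[X]) :
    ip (μ.withDensity fun z => ENNReal.ofReal (‖z - x‖ ^ 2)) f g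
      = ip μ ((X - C x) * f) ((X - C x) * g) := by
  unfold ip
  rw [integral_withDensity_eq_integral_toReal_smul (by fun_prop) (by simp)]
  congr 1; ext z
  rw [ENNReal.toReal_ofReal (by positivity), Complex.real_smul, Complex.ofReal_pow,
    ← Complex.conj_mul']
  simp only [eval_mul, eval_sub, eval_X, eval_C, map_mul]
  ring

lemma polyIntegrable_withDensity {μ : Measure ℂ} (hI : PolyIntegrable μ) (x : ℂ) :
    PolyIntegrable (μ.withDensity fun z => ENNReal.ofReal (‖z - x‖ ^ 2)) := by
  intro f g
  rw [integrable_withDensity_iff_integrable_smul' (by fun_prop) (by simp)]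
  convert hI ((X - C x) * f) ((X - C x) * g) using 2 with z
  rw [ENNReal.toReal_ofReal (by positivity), Complex.real_smul, Complex.ofReal_pow,
    ← Complex.conj_mul']
  simp only [eval_mul, eval_sub, eval_X, eval_C, map_mul]
  ring

/-- The polynomial `p_n - (p_n(x) / K_{n-1}(x,x)) K_{n-1}(·, x)` vanishes at `x` and is orthogonal
to `(z - x) 𝒫_{n-2}`, so it is a positive multiple of `(z - x) q_{n-1}`; its squared norm is
`1 + |p_n(x)|² / K_{n-1}(x,x)`, which gives the multiple. Here `n = m + 1`. -/
lemma christoffel_formula {μ : Measure ℂ} (hI : PolyIntegrable μ) {x : ℂ} {p q : ℕ → ℂ[X]}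
    {κ κ' : ℕ → ℝ} (hON : OrthonormalPolys μ p κ)
    (hON' : OrthonormalPolys (μ.withDensity fun z => ENNReal.ofReal (‖z - x‖ ^ 2)) q κ')
    (m : ℕ) {K : ℝ} (hK : K = ∑ j ∈ Finset.range (m + 1), ‖(p j).eval x‖ ^ 2) (hKpos : 0 < K) :
    C ((√(1 + ‖(p (m + 1)).eval x‖ ^ 2 / K) : ℝ) : ℂ) * ((X - C x) * q m)
      = p (m + 1) - C ((p (m + 1)).eval x / K) * kern p (m + 1) x := by
  set ν := μ.withDensity fun z => ENNReal.ofReal (‖z - x‖ ^ 2) with hν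
  have hIν : PolyIntegrable ν := polyIntegrable_withDensity hI x
  set k := kern p (m + 1) x with hk
  set c : ℂ := (p (m + 1)).eval x / K with hc
  set G := p (m + 1) - C c * k with hG
  have hkx : k.eval x = (K : ℂ) := by rw [hk, eval_kern_self, ← hK]
  have hkdeg : k.degree < (m + 1 : ℕ) := kern_degree_lt hON _ x
  have hK0 : (K : ℂ) ≠ 0 := by exact_mod_cast hKpos.ne'
  have hckdeg : (C c * k).degree < (p (m + 1)).degree := by
    rw [hON.1]; exact (degree_C_mul_le_degree _ _).trans_lt hkdeg
  have hGdeg : G.degree = (m + 1 : ℕ) := by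
    rw [hG, degree_sub_eq_left_of_degree_lt hckdeg, hON.1]
  have hGlc : G.leadingCoeff = (κ (m + 1) : ℂ) := by
    rw [hG, leadingCoeff_sub_of_degree_lt hckdeg, hON.2.2.1]
  obtain ⟨H, hH⟩ : (X - C x) ∣ G := by
    rw [dvd_iff_isRoot, IsRoot.def, hG, eval_sub, eval_mul, eval_C, hkx, hc,
      div_mul_cancel₀ _ hK0, sub_self]
  have hHdeg : H.degree < (m + 1 : ℕ) := by
    have h := hGdeg
    rw [hH, degree_mul, degree_X_sub_C] at h
    by_cases hH0 : H = 0
    · rw [hH0, degree_zero]; exact WithBot.bot_lt_coe _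
    · rw [degree_eq_natDegree hH0] at h ⊢
      norm_cast at h ⊢
      omega
  have hGorth : ∀ r : ℂ[X], r.degree < (m + 1 : ℕ) → r.eval x = 0 → ip μ r G = 0 := by
    intro r hr hrx
    rw [hG, ip_sub_right hI, ip_C_mul_right, ← conj_ip (p (m + 1)) r, ← conj_ip k r,
      hON.ip_eq_zero hI hr, ip_kern hI hON x hr, hrx]
    simp
  -- Only the last Fourier coefficient of `H` with respect to `q` survives.
  have hHq : H = C (ip ν (q m) H) * q m := by
    have h := hON'.expansion hIν hHdeg
    rw [Finset.sum_range_succ, Finset.sum_eq_zero, zero_add] at h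
    · exact h
    · intro j hj
      rw [hν, ip_withDensity, ← hH, hGorth _ _ (by simp)]
      · simp
      · rw [degree_mul, degree_X_sub_C, hON'.1]
        have := Finset.mem_range.1 hj
        norm_cast
        omega
  set a := ip ν (q m) H with ha
  have halc : a * (κ' m : ℂ) = (κ (m + 1) : ℂ) := by
    rw [← hGlc, hH, leadingCoeff_mul, leadingCoeff_X_sub_C, one_mul, hHq, leadingCoeff_mul,
      leadingCoeff_C, hON'.2.2.1]
  have hareal : a = ((κ (m + 1) / κ' m : ℝ) : ℂ) := by
    have : (κ' m : ℂ) ≠ 0 := by exact_mod_cast (hON'.2.1 m).ne'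
    rw [Complex.ofReal_div, eq_div_iff this, halc]
  have hGG : ip μ G G = ((1 + ‖(p (m + 1)).eval x‖ ^ 2 / K : ℝ) : ℂ) := by
    have h1 : ip μ (p (m + 1)) G = 1 := by
      rw [hG, ip_sub_right hI, ip_C_mul_right, hON.ip_eq_zero hI hkdeg, hON.ip_eq]
      simp
    have h2 : ip μ k G = -(c * K) := by
      rw [hG, ip_sub_right hI, ip_C_mul_right, ip_kern hI hON x hkdeg, hkx, ← conj_ip,
        hON.ip_eq_zero hI hkdeg]
      simp
    have h3 : ip μ G G = 1 + c * (starRingEnd ℂ) c * K := by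
      conv_lhs => rw [hG]
      rw [← hG, ← conj_ip, ip_sub_right hI, ip_C_mul_right, ← conj_ip (p (m + 1)) G,
        ← conj_ip k G, h1, h2]
      simp
      ring
    rw [h3, Complex.mul_conj', hc, norm_div, Complex.norm_real, Real.norm_of_nonneg hKpos.le]
    push_cast
    field_simp
  have hHH : ip μ G G = a * (starRingEnd ℂ) a := by
    have h1 : ip ν H H = a * (starRingEnd ℂ) a := by
      conv_lhs => rw [hHq]
      rw [ip_C_mul_right, ← conj_ip, ip_C_mul_right, hON'.ip_eq]
      simp
    rw [← h1, hν, ip_withDensity, ← hH]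
  have hasqrt : a = ((√(1 + ‖(p (m + 1)).eval x‖ ^ 2 / K) : ℝ) : ℂ) := by
    have hpos : 0 < κ (m + 1) / κ' m := div_pos (hON.2.1 _) (hON'.2.1 _)
    rw [hGG, hareal, Complex.conj_ofReal] at hHH
    rw [hareal]
    congr 1
    symm
    rw [Real.sqrt_eq_iff_mul_self_eq (by positivity) hpos.le]
    exact_mod_cast hHH
  rw [← hasqrt, mul_left_comm, ← hHq, ← hH]

theorem christoffel_transform_ratio_asymptotics
    (μ : Measure ℂ) [IsFiniteMeasure μ]
    (hc : IsCompact (measSupport μ)) (hi : (measSupport μ).Infinite)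
    (x : ℂ)
    (p : ℕ → Polynomial ℂ) (κ : ℕ → ℝ) (hON : OrthonormalPolys μ p κ)
    (hx : Tendsto
      (fun n => ‖(p n).eval x‖ ^ 2 / ∑ j ∈ Finset.range n, ‖(p j).eval x‖ ^ 2)
      atTop (𝓝 0))
    (q : ℕ → Polynomial ℂ) (κ' : ℕ → ℝ)
    (hON' : OrthonormalPolys
      (μ.withDensity fun z => ENNReal.ofReal (‖z - x‖ ^ 2)) q κ') :
    ∀ K : Set ℂ, IsCompact K → K ⊆ (convexHull ℝ (measSupport μ))ᶜ →
      TendstoUniformlyOn (fun n z => (z - x) * (q (n - 1)).eval z / (p n).eval z)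
        (fun _ => (1 : ℂ)) atTop K := by
  intro K hK hKsub
  have hI := polyIntegrable_of_compact hc
  set Ch := convexHull ℝ (measSupport μ) with hCh
  have hChc : IsCompact Ch := isCompact_convexHull_of_finiteDimensional hc
  have hChne : Ch.Nonempty := hi.nonempty.mono (subset_convexHull ℝ _)
  obtain ⟨δ, hδ, hδK⟩ : ∃ δ : ℝ, 0 < δ ∧ ∀ z ∈ K, ∀ w ∈ Ch, δ ≤ ‖w - z‖ := by
    obtain ⟨r, hr, h⟩ := Metric.exists_pos_forall_lt_edist hK hChc.isClosed
      (Set.subset_compl_iff_disjoint_right.1 hKsub)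
    refine ⟨r, hr, fun z hz w hw => ?_⟩
    have := h z hz w hw
    rw [edist_comm, edist_nndist, ENNReal.coe_lt_coe] at this
    rw [← dist_eq_norm, ← coe_nndist]
    exact_mod_cast this.le
  obtain ⟨D, hD, hDK⟩ : ∃ D : ℝ, 0 < D ∧ ∀ z ∈ K, ∀ w ∈ Ch, ‖w - z‖ ≤ D := by
    obtain ⟨A, hA, hAK⟩ := hK.isBounded.exists_pos_norm_le
    obtain ⟨B, hB, hBK⟩ := hChc.isBounded.exists_pos_norm_le
    exact ⟨B + A, by positivity, fun z hz w hw =>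
      (norm_sub_le _ _).trans (add_le_add (hBK w hw) (hAK z hz))⟩
  set M := D ^ 2 / δ ^ 2 with hM
  have hdom : ∀ z ∈ K, ∀ n : ℕ, ∀ f : ℂ[X], f.degree < n → ∀ N : ℝ, 0 < N →
      ∫ w, ‖f.eval w‖ ^ 2 ∂μ ≤ N ^ 2 → ‖f.eval z‖ ≤ M * N * ‖(p n).eval z‖ := by
    intro z hz n f hf N hN hfN
    obtain ⟨u, hu, hsep⟩ := exists_unit_separating hChc (convex_convexHull ℝ _) hChne hδ (hδK z hz)
    refine norm_eval_le_of_separated hI hON hf hδ hu hD ?_ hN hfN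
    filter_upwards [ae_mem_measSupport μ] with w hw
    have hw' : w ∈ Ch := subset_convexHull ℝ _ hw
    exact ⟨hsep w hw', hDK z hz w hw'⟩
  -- Comparison with the constant polynomial `1` shows that `p_n` has no zeros on `K`.
  have hne : ∀ z ∈ K, ∀ m : ℕ, (p (m + 1)).eval z ≠ 0 := by
    intro z hz m h0
    have hnn : 0 ≤ ∫ w, ‖(1 : ℂ[X]).eval w‖ ^ 2 ∂μ := integral_nonneg fun w => by positivity
    have := hdom z hz (m + 1) 1 (by rw [degree_one]; exact_mod_cast m.succ_pos)
      (1 + ∫ w, ‖(1 : ℂ[X]).eval w‖ ^ 2 ∂μ) (by positivity) (by nlinarith)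
    rw [h0, norm_zero, mul_zero, eval_one, norm_one] at this
    exact absurd this (by norm_num)
  set ε : ℕ → ℝ := fun n => ‖(p n).eval x‖ ^ 2 / ∑ j ∈ Finset.range n, ‖(p j).eval x‖ ^ 2 with hε
  have hε0 : ∀ n, 0 ≤ ε n := fun n => by simp only [hε]; positivity
  have hbound : ∀ m : ℕ, ∀ z ∈ K,
      ‖(z - x) * (q m).eval z / (p (m + 1)).eval z - 1‖
        ≤ |(√(1 + ε (m + 1)))⁻¹ - 1| + (√(1 + ε (m + 1)))⁻¹ * (√(ε (m + 1)) * M) := by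
    intro m z hz
    obtain ⟨S, hS⟩ : ∃ S, S = ∑ j ∈ Finset.range (m + 1), ‖(p j).eval x‖ ^ 2 := ⟨_, rfl⟩
    have hSpos : 0 < S := by
      rw [hS]
      refine Finset.sum_pos' (fun j _ => by positivity) ⟨0, by simp, ?_⟩
      have h0 : p 0 = C ((p 0).coeff 0) := eq_C_of_degree_le_zero (hON.1 0).le
      have h1 : (p 0).coeff 0 ≠ 0 := by
        intro h
        rw [h, C_0] at h0
        have := hON.1 0
        rw [h0] at this
        simp at this
      rw [h0, eval_C]
      positivity
    have hεm : ε (m + 1) = ‖(p (m + 1)).eval x‖ ^ 2 / S := by simp only [hε, hS]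
    have hform := congrArg (eval z) (christoffel_formula hI hON hON' m hS hSpos)
    rw [← hεm] at hform
    simp only [eval_mul, eval_sub, eval_C, eval_X] at hform
    set a := √(1 + ε (m + 1)) with ha
    have hapos : 0 < a := Real.sqrt_pos.2 (by linarith [hε0 (m + 1)])
    have haC : (a : ℂ) ≠ 0 := by exact_mod_cast hapos.ne'
    have hpz := hne z hz m
    have hkle : ‖(kern p (m + 1) x).eval z‖ ≤ M * √S * ‖(p (m + 1)).eval z‖ := by
      refine hdom z hz (m + 1) _ (kern_degree_lt hON _ x) _ (Real.sqrt_pos.2 hSpos) ?_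
      rw [Real.sq_sqrt hSpos.le]
      have h1 := ip_kern hI hON x (kern_degree_lt hON (m + 1) x)
      rw [ip_self, eval_kern_self, ← hS] at h1
      exact le_of_eq (by exact_mod_cast h1)
    set t : ℂ := (p (m + 1)).eval x / S * (kern p (m + 1) x).eval z / (p (m + 1)).eval z with ht
    have htle : ‖t‖ ≤ √(ε (m + 1)) * M := by
      have h2 : √(ε (m + 1)) = ‖(p (m + 1)).eval x‖ / √S := by
        rw [hεm, Real.sqrt_div (by positivity), Real.sqrt_sq (norm_nonneg _)]
      have hpz' : 0 < ‖(p (m + 1)).eval z‖ := norm_pos_iff.2 hpz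
      have hsS : 0 < √S := Real.sqrt_pos.2 hSpos
      rw [ht, norm_div, norm_mul, norm_div, Complex.norm_real, Real.norm_of_nonneg hSpos.le,
        div_le_iff₀ hpz', h2]
      calc ‖(p (m + 1)).eval x‖ / S * ‖(kern p (m + 1) x).eval z‖
          ≤ ‖(p (m + 1)).eval x‖ / S * (M * √S * ‖(p (m + 1)).eval z‖) := by gcongr
        _ = ‖(p (m + 1)).eval x‖ / (√S * √S) * (M * √S * ‖(p (m + 1)).eval z‖) := by
            rw [Real.mul_self_sqrt hSpos.le]
        _ = _ := by field_simp
    have hratio : (z - x) * (q m).eval z / (p (m + 1)).eval z - 1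
        = ((a⁻¹ - 1 : ℝ) : ℂ) - ((a⁻¹ : ℝ) : ℂ) * t := by
      have h3 : (z - x) * (q m).eval z = (a : ℂ)⁻¹ * ((p (m + 1)).eval z
          - (p (m + 1)).eval x / S * (kern p (m + 1) x).eval z) := by
        rw [← hform, inv_mul_cancel_left₀ haC]
      rw [h3, ht]
      push_cast
      field_simp
      ring
    rw [hratio]
    refine (norm_sub_le _ _).trans ?_
    rw [norm_mul, Complex.norm_real, Complex.norm_real, Real.norm_eq_abs,
      Real.norm_of_nonneg (inv_nonneg.2 hapos.le)]
    gcongr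
  have hlim : Tendsto (fun n => |(√(1 + ε n))⁻¹ - 1| + (√(1 + ε n))⁻¹ * (√(ε n) * M))
      atTop (𝓝 0) := by
    have h1 : Tendsto (fun n => (√(1 + ε n))⁻¹) atTop (𝓝 1) := by
      have := ((hx.const_add 1).sqrt).inv₀ (by simp)
      simpa using this
    have h2 : Tendsto (fun n => √(ε n)) atTop (𝓝 0) := by simpa using hx.sqrt
    simpa using ((h1.sub_const 1).abs).add (h1.mul (h2.mul_const M))
  rw [Metric.tendstoUniformlyOn_iff]
  intro η hη
  filter_upwards [hlim.eventually (gt_mem_nhds hη), eventually_ge_atTop 1] with n hn hn1 z hz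
  obtain ⟨m, rfl⟩ : ∃ m, n = m + 1 := ⟨n - 1, by omega⟩
  rw [dist_comm, dist_eq_norm]
  exact (hbound m z hz).trans_lt hn
end
end

section
/- Let μ be a finite positive Borel measure on ℂ with compact infinite support, let x ∈ ℂ, and define dν^x(z) = |z−x|² dμ(z). Then for every n ≥ 1, ‖Φ_{n−1}(·;ν^x)‖²_{L²(ν^x)} = ‖Φ_n(·;μ)‖²_{L²(μ)} + |Φ_n(x;μ)|² / K_{n−1}(x,x;μ). -/
/-!
Write `K = ∑_{j<n} |p_j(x)|²` and `⟨f, g⟩ = ∫ conj f · g dμ`. The polynomial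
`r = (z - x) q_{n-1}` has degree `n`, leading coefficient `κ'_{n-1}`, unit norm in `L²(μ)`, vanishes
at `x`, and is orthogonal in `L²(μ)` to every polynomial of degree `< n` that vanishes at `x`.
Expand `r = ∑_{j≤n} c_j p_j`, so that `c_n = κ'_{n-1} / κ_n`. Orthogonality to
`p_j - (p_j(x) / p_0) p_0` for `j < n` gives `c_j = l · conj (p_j(x))` with `l` independent of `j`;
then `r(x) = 0` reads `l K + c_n p_n(x) = 0`, and `‖r‖ = 1` reads `|l|² K + |c_n|² = 1`.
Eliminating `l` gives `|c_n|² (1 + |p_n(x)|² / K) = 1`, which is the claim since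
`‖Φ_{n-1}(·; ν^x)‖² = κ'_{n-1}⁻²` and `‖Φ_n(·; μ)‖² = κ_n⁻²`.

Square-integrability of all polynomials comes from orthonormality alone: the Bochner integral of
`|p_n|²` equals `1`, and it would be `0` if `|p_n|²` were not integrable.
-/

open MeasureTheory Filter Topology Polynomial

noncomputable section

/-- The sesquilinear form `⟨f, g⟩ = ∫ conj f · g dμ` on polynomials, conjugate-linear in the first
argument. -/
def polyInner (μ : Measure ℂ) (f g : ℂ[X]) : ℂ :=
  ∫ z, (starRingEnd ℂ) (f.eval z) * g.eval z ∂μ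

lemma exists_expansion {p : ℕ → ℂ[X]} (hp : ∀ n, (p n).degree = n) (N : ℕ) :
    ∀ f : ℂ[X], f.degree < N → ∃ c : ℕ → ℂ, f = ∑ j ∈ Finset.range N, C (c j) * p j := by
  induction N with
  | zero =>
    intro f hf
    refine ⟨0, ?_⟩
    simpa using hf
  | succ N ih =>
    intro f hf
    have hlc : (p N).coeff N ≠ 0 := Polynomial.coeff_ne_zero_of_eq_degree (hp N)
    -- Cancel the coefficient of `z ^ N` and expand the remainder.
    obtain ⟨c, hc⟩ := ih (f - C (f.coeff N / (p N).coeff N) * p N) (by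
      rw [Polynomial.degree_lt_iff_coeff_zero]
      intro k hk
      rcases hk.eq_or_lt with rfl | hk
      · simp [hlc]
      · have h1 : f.coeff k = 0 :=
          Polynomial.coeff_eq_zero_of_degree_lt (hf.trans_le (by exact_mod_cast hk))
        have h2 : (p N).coeff k = 0 :=
          Polynomial.coeff_eq_zero_of_degree_lt (by rw [hp]; exact_mod_cast hk)
        simp [h1, h2])
    refine ⟨fun j => if j = N then f.coeff N / (p N).coeff N else c j, ?_⟩
    rw [Finset.sum_range_succ]
    have h : ∑ j ∈ Finset.range N, C (if j = N then f.coeff N / (p N).coeff N else c j) * p j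
        = ∑ j ∈ Finset.range N, C (c j) * p j :=
      Finset.sum_congr rfl fun j hj => by rw [if_neg (Finset.mem_range.1 hj).ne]
    rw [h, ← hc]
    simp

/-- Orthonormality forces every polynomial to be square-integrable: the Bochner integral of
`|p_n|²` is nonzero, so `|p_n|²` is integrable, and the `p_n` span. -/
lemma memLp_eval {μ : Measure ℂ} {p : ℕ → ℂ[X]} {κ : ℕ → ℝ} (h : OrthonormalPolys μ p κ)
    (f : ℂ[X]) : MemLp (fun z => f.eval z) 2 μ := by
  have hp : ∀ n, MemLp (fun z => (p n).eval z) 2 μ := by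
    intro n
    have hint : Integrable (fun z => (starRingEnd ℂ) ((p n).eval z) * (p n).eval z) μ := by
      by_contra hn
      have := h.2.2.2 n n
      rw [integral_undef hn] at this
      simp at this
    rw [memLp_two_iff_integrable_sq_norm (p n).continuous.aestronglyMeasurable]
    refine hint.norm.congr (.of_forall fun z => ?_)
    simp [sq]
  obtain ⟨c, hc⟩ := exists_expansion h.1 (f.natDegree + 1) f
    (Polynomial.degree_le_natDegree.trans_lt (by exact_mod_cast Nat.lt_succ_self _))
  have : (fun z => f.eval z)
      = fun z => ∑ j ∈ Finset.range (f.natDegree + 1), c j * (p j).eval z := by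
    funext z
    conv_lhs => rw [hc]
    simp [Polynomial.eval_finsetSum]
  rw [this]
  exact memLp_finsetSum _ fun j _ => (hp j).const_mul (c j)

lemma integrable_conj_mul {μ : Measure ℂ} {p : ℕ → ℂ[X]} {κ : ℕ → ℝ}
    (h : OrthonormalPolys μ p κ) (f g : ℂ[X]) :
    Integrable (fun z => (starRingEnd ℂ) (f.eval z) * g.eval z) μ :=
  (memLp_eval h f).star.integrable_mul (memLp_eval h g)

lemma polyInner_sum_right {μ : Measure ℂ} {p : ℕ → ℂ[X]} {κ : ℕ → ℝ}
    (h : OrthonormalPolys μ p κ) (f : ℂ[X]) (c : ℕ → ℂ) (g : ℕ → ℂ[X]) (N : ℕ) :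
    polyInner μ f (∑ j ∈ Finset.range N, C (c j) * g j)
      = ∑ j ∈ Finset.range N, c j * polyInner μ f (g j) := by
  unfold polyInner
  simp_rw [← integral_const_mul]
  rw [← integral_finsetSum _ fun j _ => (integrable_conj_mul h f (g j)).const_mul (c j)]
  congr 1
  funext z
  simp only [Polynomial.eval_finsetSum, Finset.mul_sum, eval_mul, eval_C]
  exact Finset.sum_congr rfl fun j _ => by ring

lemma polyInner_conj (μ : Measure ℂ) (f g : ℂ[X]) :
    (starRingEnd ℂ) (polyInner μ f g) = polyInner μ g f := by
  unfold polyInner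
  rw [← integral_conj]
  congr 1
  funext z
  simp [mul_comm]

lemma polyInner_sum_left {μ : Measure ℂ} {p : ℕ → ℂ[X]} {κ : ℕ → ℝ}
    (h : OrthonormalPolys μ p κ) (f : ℂ[X]) (c : ℕ → ℂ) (g : ℕ → ℂ[X]) (N : ℕ) :
    polyInner μ (∑ j ∈ Finset.range N, C (c j) * g j) f
      = ∑ j ∈ Finset.range N, (starRingEnd ℂ) (c j) * polyInner μ (g j) f := by
  rw [← polyInner_conj, polyInner_sum_right h, map_sum]
  exact Finset.sum_congr rfl fun j _ => by rw [map_mul, polyInner_conj]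

lemma polyInner_sub_C_mul_left {μ : Measure ℂ} {p : ℕ → ℂ[X]} {κ : ℕ → ℝ}
    (h : OrthonormalPolys μ p κ) (f g r : ℂ[X]) (a : ℂ) :
    polyInner μ (f - C a * g) r
      = polyInner μ f r - (starRingEnd ℂ) a * polyInner μ g r := by
  unfold polyInner
  rw [← integral_const_mul, ← integral_sub (integrable_conj_mul h f r)
    ((integrable_conj_mul h g r).const_mul _)]
  congr 1
  funext z
  simp only [eval_sub, eval_mul, eval_C, map_sub, map_mul]
  ring

lemma polyInner_eq_zero_of_degree_lt {μ : Measure ℂ} {p : ℕ → ℂ[X]} {κ : ℕ → ℝ}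
    (h : OrthonormalPolys μ p κ) {m : ℕ} {f : ℂ[X]} (hf : f.degree < m) :
    polyInner μ f (p m) = 0 := by
  obtain ⟨d, rfl⟩ := exists_expansion h.1 m f hf
  rw [polyInner_sum_left h]
  refine Finset.sum_eq_zero fun j hj => ?_
  have : polyInner μ (p j) (p m) = 0 := by
    rw [polyInner, h.2.2.2 j m, if_neg (Finset.mem_range.1 hj).ne]
  rw [this, mul_zero]

lemma polyInner_withDensity (μ : Measure ℂ) (x : ℂ) (f g : ℂ[X]) :
    polyInner (μ.withDensity fun z => ENNReal.ofReal (‖z - x‖ ^ 2)) f g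
      = polyInner μ ((X - C x) * f) ((X - C x) * g) := by
  unfold polyInner
  rw [integral_withDensity_eq_integral_toReal_smul (by fun_prop)
    (.of_forall fun z => ENNReal.ofReal_lt_top)]
  congr 1
  funext z
  rw [ENNReal.toReal_ofReal (by positivity), Complex.real_smul]
  simp only [eval_mul, eval_sub, eval_X, eval_C, map_mul]
  rw [Complex.ofReal_pow, ← Complex.conj_mul']
  ring

lemma integral_norm_sq_monic {μ : Measure ℂ} {p : ℕ → ℂ[X]} {κ : ℕ → ℝ}
    (h : OrthonormalPolys μ p κ) (n : ℕ) :
    ∫ z, ‖(p n).eval z / (κ n : ℂ)‖ ^ 2 ∂μ = 1 / κ n ^ 2 := by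
  have h1 : ∫ z, ‖(p n).eval z‖ ^ 2 ∂μ = 1 := by
    have := h.2.2.2 n n
    simp_rw [Complex.conj_mul', if_true, ← Complex.ofReal_pow] at this
    rw [integral_complex_ofReal] at this
    exact_mod_cast this
  simp_rw [norm_div, div_pow]
  rw [integral_div, h1]
  simp

theorem christoffel_transform_monic_norm_identity
    (μ : Measure ℂ) [IsFiniteMeasure μ]
    (hc : IsCompact (measSupport μ)) (hi : (measSupport μ).Infinite)
    (x : ℂ)
    (p : ℕ → Polynomial ℂ) (κ : ℕ → ℝ) (hON : OrthonormalPolys μ p κ)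
    (q : ℕ → Polynomial ℂ) (κ' : ℕ → ℝ)
    (hON' : OrthonormalPolys
      (μ.withDensity fun z => ENNReal.ofReal (‖z - x‖ ^ 2)) q κ') :
    ∀ n : ℕ, 1 ≤ n →
      (∫ z, ‖(q (n - 1)).eval z / (κ' (n - 1) : ℂ)‖ ^ 2
          ∂(μ.withDensity fun z => ENNReal.ofReal (‖z - x‖ ^ 2))) =
        (∫ z, ‖(p n).eval z / (κ n : ℂ)‖ ^ 2 ∂μ) +
          ‖(p n).eval x / (κ n : ℂ)‖ ^ 2 / ∑ j ∈ Finset.range n, ‖(p j).eval x‖ ^ 2 := by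
  intro n hn
  obtain ⟨m, rfl⟩ : ∃ m, n = m + 1 := ⟨n - 1, by omega⟩
  rw [integral_norm_sq_monic hON', integral_norm_sq_monic hON, Nat.add_sub_cancel]
  have hδ : ∀ i j, polyInner μ (p i) (p j) = if i = j then 1 else 0 := hON.2.2.2
  set r : ℂ[X] := (X - C x) * q m with hr
  have hrdeg : r.degree = ((m + 1 : ℕ) : WithBot ℕ) := by
    rw [hr, degree_mul, degree_X_sub_C, hON'.1 m]
    push_cast
    ring
  obtain ⟨c, hc⟩ := exists_expansion hON.1 (m + 2) r (by
    rw [hrdeg]; exact_mod_cast Nat.lt_succ_self _)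
  have hcoef : ∀ i < m + 2, polyInner μ (p i) r = c i := by
    intro i hi
    rw [hc, polyInner_sum_right hON]
    simp [hδ, hi]
  have hnorm : ∑ j ∈ Finset.range (m + 2), ‖c j‖ ^ 2 = 1 := by
    have h1 : polyInner μ r r = 1 := by
      rw [hr, ← polyInner_withDensity]
      exact (hON'.2.2.2 m m).trans (if_pos rfl)
    have h2 : polyInner μ r r = ∑ j ∈ Finset.range (m + 2), (starRingEnd ℂ) (c j) * c j := by
      conv_lhs => rw [hc]
      rw [polyInner_sum_left hON, ← hc]
      exact Finset.sum_congr rfl fun j hj => by rw [hcoef j (Finset.mem_range.1 hj)]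
    rw [h1] at h2
    simp_rw [Complex.conj_mul'] at h2
    exact_mod_cast h2.symm
  have hlead : c (m + 1) * κ (m + 1) = κ' m := by
    have h1 : r.coeff (m + 1) = κ' m := by
      have : r.leadingCoeff = κ' m := by
        rw [hr, leadingCoeff_mul, leadingCoeff_X_sub_C, one_mul, hON'.2.2.1 m]
      rwa [leadingCoeff, natDegree_eq_of_degree_eq_some hrdeg] at this
    have h2 : (p (m + 1)).coeff (m + 1) = κ (m + 1) := by
      have := hON.2.2.1 (m + 1)
      rwa [leadingCoeff, natDegree_eq_of_degree_eq_some (hON.1 (m + 1))] at this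
    rw [← h1, hc, finsetSum_coeff, Finset.sum_range_succ, Finset.sum_eq_zero, coeff_C_mul, h2,
      zero_add]
    intro j hj
    rw [coeff_C_mul, coeff_eq_zero_of_degree_lt, mul_zero]
    rw [hON.1 j]
    exact_mod_cast Finset.mem_range.1 hj
  -- `p 0` is a nonzero constant.
  have ha : (p 0).eval x ≠ 0 := by
    have h0 : (p 0).degree = 0 := by simpa using hON.1 0
    rw [eq_C_of_degree_eq_zero h0, eval_C]
    exact coeff_ne_zero_of_eq_degree (hON.1 0)
  set l : ℂ := c 0 / (starRingEnd ℂ) ((p 0).eval x) with hl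
  have hcj : ∀ j < m + 1, c j = l * (starRingEnd ℂ) ((p j).eval x) := by
    intro j hj
    set s : ℂ[X] := p j - C ((p j).eval x / (p 0).eval x) * p 0 with hs
    have hsx : s.IsRoot x := by
      simp [hs, ha]
    obtain ⟨t, ht⟩ := dvd_iff_isRoot.2 hsx
    have hsdeg : s.degree < ((m + 1 : ℕ) : WithBot ℕ) := by
      refine (degree_sub_le _ _).trans_lt (max_lt ?_ ?_)
      · rw [hON.1]; exact_mod_cast hj
      · rw [C_mul']
        refine (degree_smul_le _ _).trans_lt ?_
        rw [hON.1]; exact_mod_cast Nat.succ_pos m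
    have htdeg : t.degree < m := by
      rw [ht, mul_comm, degree_mul, degree_X_sub_C] at hsdeg
      push_cast at hsdeg
      exact lt_of_add_lt_add_right hsdeg
    have h0 : polyInner μ s r = 0 := by
      rw [ht, hr, ← polyInner_withDensity]
      exact polyInner_eq_zero_of_degree_lt hON' htdeg
    rw [hs, polyInner_sub_C_mul_left hON, hcoef j (by omega), hcoef 0 (by omega), sub_eq_zero,
      map_div₀] at h0
    rw [h0, hl]
    ring
  set K : ℝ := ∑ j ∈ Finset.range (m + 1), ‖(p j).eval x‖ ^ 2 with hK
  have hKpos : 0 < K :=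
    Finset.sum_pos' (fun j _ => by positivity) ⟨0, by simp, by positivity⟩
  have hroot : l * K + c (m + 1) * (p (m + 1)).eval x = 0 := by
    have h1 : r.eval x = 0 := by simp [hr]
    rw [hc, eval_finsetSum, Finset.sum_range_succ] at h1
    rw [← h1, hK]
    push_cast
    rw [Finset.mul_sum]
    congr 1
    · refine Finset.sum_congr rfl fun j hj => ?_
      rw [eval_mul, eval_C, hcj j (Finset.mem_range.1 hj), ← Complex.conj_mul']
      ring
    · simp
  have hnorm' : ‖l‖ ^ 2 * K + ‖c (m + 1)‖ ^ 2 = 1 := by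
    rw [← hnorm, Finset.sum_range_succ, hK, Finset.mul_sum]
    congr 1
    refine Finset.sum_congr rfl fun j hj => ?_
    rw [hcj j (Finset.mem_range.1 hj), norm_mul, mul_pow, Complex.norm_conj]
  have hroot' : ‖l‖ * K = ‖c (m + 1)‖ * ‖(p (m + 1)).eval x‖ := by
    have := congrArg norm (eq_neg_of_add_eq_zero_left hroot)
    rwa [norm_neg, norm_mul, norm_mul, Complex.norm_real, Real.norm_of_nonneg hKpos.le] at this
  have hk := hON.2.1 (m + 1)
  have hk' := hON'.2.1 m
  have hlead' : ‖c (m + 1)‖ * κ (m + 1) = κ' m := by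
    have := congrArg norm hlead
    rwa [norm_mul, Complex.norm_real, Complex.norm_real, Real.norm_of_nonneg hk.le,
      Real.norm_of_nonneg hk'.le] at this
  rw [norm_div, Complex.norm_real, Real.norm_of_nonneg hk.le]
  have hck : ‖c (m + 1)‖ ≠ 0 := by
    intro h0
    rw [h0, zero_mul] at hlead'
    exact hk'.ne hlead'
  have hfin : ‖c (m + 1)‖ ^ 2 * (‖(p (m + 1)).eval x‖ ^ 2 + K) = K := by
    calc _ = (‖c (m + 1)‖ * ‖(p (m + 1)).eval x‖) ^ 2 + ‖c (m + 1)‖ ^ 2 * K := by ring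
      _ = K * (‖l‖ ^ 2 * K + ‖c (m + 1)‖ ^ 2) := by rw [← hroot']; ring
      _ = K := by rw [hnorm', mul_one]
  rw [← hlead']
  field_simp
  linarith
end
end
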